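/- arXiv:1109.5135 — 2 statements merged into one kernel-verified Lean document; each statement's English description precedes it below -/
import Mathlib

section
/- Let H be a fixed simple graph on k ≥ 3 vertices with m ≥ 1 edges. There is a constant c > 0 depending only on H such that for every n ≥ 1 there exists a learning graph for the subgraph-detection function f_{H,n} whose complexity is at most c · n^{2 - 2/(k+1) - k/((k+1)(m+1))}. -/
/-!
Learning graphs (Belovs) and the subgraph-detection function.
-/

/-- A learning graph for a function `f` with domain `D ⊆ {0,1}^ι`. -/
structure LearningGraph {ι : Type} [Fintype ι] [DecidableEq ι]
    (D : Set (ι → Bool)) (f : (ι → Bool) → Bool) where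
  /-- the vertex set -/
  V : Type
  [fintypeV : Fintype V]
  [decEqV : DecidableEq V]
  /-- the root -/
  root : V
  /-- the directed edge set -/
  E : Finset (V × V)
  /-- a topological ranking witnessing acyclicity -/
  rank : V → ℕ
  acyclic : ∀ e ∈ E, rank e.1 < rank e.2
  /-- the loaded variable indices at each vertex -/
  S : V → Finset ι
  S_root : S root = ∅
  S_mono : ∀ e ∈ E, S e.1 ⊆ S e.2
  /-- the weight function (only its values on `E` matter) -/
  w : V × V → ℝ
  w_pos : ∀ e ∈ E, 0 < w e
  /-- the flows, one for each 1-input of `f` -/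
  p : (ι → Bool) → V × V → ℝ
  /-- the net flow out of the root is 1 -/
  flow_root : ∀ y ∈ D, f y = true →
    ((∑ e ∈ E, if e.1 = root then p y e else 0)
      - ∑ e ∈ E, if e.2 = root then p y e else 0) = 1
  /-- at every non-root vertex, either the flow is conserved, or the vertex is a sink
  (strictly positive net incoming flow) and then its label is a 1-certificate for `y` -/
  flow_cons : ∀ y ∈ D, f y = true → ∀ v : V, v ≠ root →
    ((∑ e ∈ E, if e.2 = v then p y e else 0)
        - ∑ e ∈ E, if e.1 = v then p y e else 0) = 0 ∨
      (0 < ((∑ e ∈ E, if e.2 = v then p y e else 0)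
        - ∑ e ∈ E, if e.1 = v then p y e else 0) ∧
        ∀ z ∈ D, (∀ i ∈ S v, z i = y i) → f z = true)

attribute [instance] LearningGraph.fintypeV LearningGraph.decEqV

namespace LearningGraph

variable {ι : Type} [Fintype ι] [DecidableEq ι] {D : Set (ι → Bool)}
  {f : (ι → Bool) → Bool}

/-- The length of a learning graph edge. -/
def len (G : LearningGraph D f) (e : G.V × G.V) : ℕ :=
  (G.S e.2 \ G.S e.1).card

/-- The negative complexity `C₀`. -/
noncomputable def C0 (G : LearningGraph D f) : ℝ :=
  ∑ e ∈ G.E, (G.len e : ℝ) * G.w e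

/-- The positive complexity `C₁`: the maximum over 1-inputs `y`. -/
noncomputable def C1 (G : LearningGraph D f) : ℝ :=
  ⨆ y : {y : ι → Bool // y ∈ D ∧ f y = true},
    ∑ e ∈ G.E, (G.len e : ℝ) * (G.p y.1 e) ^ 2 / G.w e

/-- The complexity of a learning graph. -/
noncomputable def complexity (G : LearningGraph D f) : ℝ :=
  Real.sqrt (G.C0 * G.C1)

end LearningGraph

/-- The edge slots of an `n`-vertex graph: the `C(n,2)` unordered pairs,
represented by ordered pairs with increasing entries. -/
abbrev EdgeSlot (n : ℕ) := {q : Fin n × Fin n // q.1 < q.2}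

/-- `x : EdgeSlot n → Bool` contains a copy of `H` as a (not necessarily induced) subgraph. -/
def HasHCopy {k n : ℕ} (H : SimpleGraph (Fin k)) (x : EdgeSlot n → Bool) : Prop :=
  ∃ φ : Fin k ↪ Fin n, ∀ i j : Fin k, H.Adj i j →
    ∀ q : EdgeSlot n,
      ((q.1.1 = φ i ∧ q.1.2 = φ j) ∨ (q.1.1 = φ j ∧ q.1.2 = φ i)) → x q = true

open Classical in
/-- The subgraph-detection function `f_{H,n}`. -/
noncomputable def subgraphFn {k : ℕ} (H : SimpleGraph (Fin k)) (n : ℕ) :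
    (EdgeSlot n → Bool) → Bool :=
  fun x => if HasHCopy H x then true else false

namespace LGaux

open Finset

set_option linter.unusedSectionVars false

section measure
variable {B : Type} [Fintype B] [DecidableEq B]

/-- Bernoulli product weight of a set of bits. -/
noncomputable def mu (q : B → ℝ) (X : Finset B) : ℝ :=
  (∏ b ∈ X, q b) * ∏ b ∈ Xᶜ, (1 - q b)

lemma mu_pos (q : B → ℝ) (h0 : ∀ b, 0 < q b) (h1 : ∀ b, q b ≤ 1 / 2) (X : Finset B) :
    0 < mu q X := by
  unfold mu
  apply mul_pos
  · exact prod_pos fun b _ => h0 b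
  · exact prod_pos fun b _ => by linarith [h1 b]

lemma sum_mu_superset (q : B → ℝ) (Y : Finset B) :
    ∑ X : Finset B, (if Y ⊆ X then mu q X else 0) = ∏ b ∈ Y, q b := by
  have h := Finset.prod_add q (fun b => if b ∈ Y then 0 else 1 - q b) univ
  rw [powerset_univ] at h
  have h2 : ∏ b, (q b + if b ∈ Y then 0 else 1 - q b) = ∏ b ∈ Y, q b := by
    rw [← Fintype.prod_ite_mem Y]
    apply prod_congr rfl
    intro b _
    split_ifs <;> ring
  rw [← h2, h]
  apply sum_congr rfl
  intro X _
  split_ifs with hY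
  · unfold mu
    congr 1
    rw [← compl_eq_univ_sdiff]
    apply prod_congr rfl
    intro b hb
    rw [if_neg]
    intro hbY
    exact (mem_compl.1 hb) (hY hbY)
  · obtain ⟨b, hbY, hbX⟩ := not_subset.1 hY
    symm
    apply mul_eq_zero_of_right
    apply prod_eq_zero (i := b)
    · simpa using hbX
    · simp [hbY]

lemma sum_mu_disjoint (q : B → ℝ) (Z : Finset B) :
    ∑ X : Finset B, (if Disjoint X Z then mu q X else 0) = ∏ b ∈ Z, (1 - q b) := by
  have h := Finset.prod_add (fun b => if b ∈ Z then 0 else q b) (fun b => 1 - q b) univ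
  rw [powerset_univ] at h
  have h2 : ∏ b, ((if b ∈ Z then 0 else q b) + (1 - q b)) = ∏ b ∈ Z, (1 - q b) := by
    rw [← Fintype.prod_ite_mem Z]
    apply prod_congr rfl
    intro b _
    split_ifs <;> ring
  rw [← h2, h]
  apply sum_congr rfl
  intro X _
  split_ifs with hY
  · unfold mu
    rw [← compl_eq_univ_sdiff]
    congr 1
    apply prod_congr rfl
    intro b hb
    rw [if_neg]
    intro hbY
    exact (disjoint_left.1 hY) hb hbY
  · obtain ⟨b, hbX, hbY⟩ := not_disjoint_iff.1 hY
    symm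
    apply mul_eq_zero_of_left
    apply prod_eq_zero (i := b) hbX
    simp [hbY]

lemma mu_union (q : B → ℝ) {X Z : Finset B} (hd : Disjoint X Z) :
    mu q (X ∪ Z) * ∏ b ∈ Z, (1 - q b) = mu q X * ∏ b ∈ Z, q b := by
  unfold mu
  have hc : Xᶜ = (X ∪ Z)ᶜ ∪ Z := by
    ext b
    have := @disjoint_left _ X Z
    simp only [mem_compl, mem_union]
    constructor
    · tauto
    · rintro (h | h)
      · tauto
      · exact fun hx => (disjoint_left.1 hd) hx h
  have hd2 : Disjoint (X ∪ Z)ᶜ Z := by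
    rw [disjoint_left]
    intro b hb
    simp only [mem_compl, mem_union] at hb
    tauto
  rw [hc, prod_union hd, prod_union hd2]
  ring

lemma prod_q_le_one (q : B → ℝ) (h0 : ∀ b, 0 < q b) (h1 : ∀ b, q b ≤ 1 / 2) (Z : Finset B) :
    ∏ b ∈ Z, q b ≤ 1 :=
  prod_le_one (fun b _ => (h0 b).le) (fun b _ => by linarith [h1 b])

lemma prod_q_anti (q : B → ℝ) (h0 : ∀ b, 0 < q b) (h1 : ∀ b, q b ≤ 1 / 2) {Z W : Finset B}
    (h : Z ⊆ W) : ∏ b ∈ W, q b ≤ ∏ b ∈ Z, q b := by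
  rw [← prod_sdiff h]
  have := prod_q_le_one q h0 h1 (W \ Z)
  have h2 : 0 < ∏ b ∈ Z, q b := prod_pos fun b _ => h0 b
  nlinarith

lemma mu_union_ge (q : B → ℝ) (h0 : ∀ b, 0 < q b) (h1 : ∀ b, q b ≤ 1 / 2) {X Z : Finset B}
    (hd : Disjoint X Z) : mu q X * ∏ b ∈ Z, q b ≤ mu q (X ∪ Z) := by
  rw [← mu_union q hd]
  have h : ∏ b ∈ Z, (1 - q b) ≤ 1 :=
    prod_le_one (fun b _ => by linarith [h1 b]) (fun b _ => by linarith [h0 b])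
  have := mu_pos q h0 h1 (X ∪ Z)
  nlinarith

lemma prod_compl_ge (q : B → ℝ) (h1 : ∀ b, q b ≤ 1 / 2) {L : ℕ} (Z : Finset B)
    (hZ : Z.card ≤ L) : 1 ≤ 2 ^ L * ∏ b ∈ Z, (1 - q b) := by
  have h : ∏ b ∈ Z, (1 / 2 : ℝ) ≤ ∏ b ∈ Z, (1 - q b) :=
    prod_le_prod (fun b _ => by norm_num) (fun b _ => by linarith [h1 b])
  rw [prod_const] at h
  have h3 : ((1 : ℝ) / 2) ^ L ≤ (1 / 2) ^ Z.card :=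
    pow_le_pow_of_le_one (by norm_num) (by norm_num) hZ
  have h4 : (2 : ℝ) ^ L * (1 / 2) ^ L = 1 := by rw [← mul_pow]; norm_num
  calc (1 : ℝ) = 2 ^ L * (1 / 2) ^ L := h4.symm
    _ ≤ _ := by gcongr; exact h3.trans h

end measure

section labels
variable {ι B τ : Type} [DecidableEq ι] [Fintype B] [DecidableEq B] [Fintype τ] [DecidableEq τ]

/-- Labels: union of the slots of active triples. -/
def lab (tri : τ → Finset B) (slot : τ → Finset ι) (X : Finset B) : Finset ι :=
  (univ.filter fun T => tri T ⊆ X).biUnion slot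

lemma lab_mono (tri : τ → Finset B) (slot : τ → Finset ι) {X Y : Finset B} (h : X ⊆ Y) :
    lab tri slot X ⊆ lab tri slot Y := by
  apply biUnion_subset_biUnion_of_subset_left
  intro T
  simp only [mem_filter, mem_univ, true_and]
  exact fun hT => hT.trans h

lemma card_lab_le (tri : τ → Finset B) (slot : τ → Finset ι) (hs : ∀ T, (slot T).card ≤ 1)
    (X : Finset B) : ((lab tri slot X).card : ℝ) ≤ ∑ T, if tri T ⊆ X then (1 : ℝ) else 0 := by
  have h := card_biUnion_le_card_mul (univ.filter fun T => tri T ⊆ X) slot 1 (fun T _ => hs T)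
  rw [← sum_filter, sum_const, nsmul_eq_mul, mul_one]
  rw [mul_one] at h
  exact_mod_cast h

lemma card_lab_sdiff_le (tri : τ → Finset B) (slot : τ → Finset ι)
    (hs : ∀ T, (slot T).card ≤ 1) (X : Finset B) (b : B) :
    ((lab tri slot (insert b X) \ lab tri slot X).card : ℝ) ≤
      ∑ T, if b ∈ tri T ∧ (tri T).erase b ⊆ X then (1 : ℝ) else 0 := by
  have hsub : lab tri slot (insert b X) \ lab tri slot X ⊆
      (univ.filter fun T => b ∈ tri T ∧ (tri T).erase b ⊆ X).biUnion slot := by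
    intro i hi
    simp only [lab, mem_sdiff, mem_biUnion, mem_filter, mem_univ, true_and, not_exists,
      not_and] at hi ⊢
    obtain ⟨⟨T, hT, hiT⟩, hn⟩ := hi
    refine ⟨T, ⟨?_, ?_⟩, hiT⟩
    · by_contra hb
      exact hn T ((subset_insert_iff_of_notMem hb).1 hT) hiT
    · exact subset_insert_iff.1 hT
  have h := card_biUnion_le_card_mul
    (univ.filter fun T => b ∈ tri T ∧ (tri T).erase b ⊆ X) slot 1 (fun T _ => hs T)
  rw [← sum_filter, sum_const, nsmul_eq_mul, mul_one]
  rw [mul_one] at h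
  exact_mod_cast (card_le_card hsub).trans h

end labels

section graph
variable {ι B τ : Type} [DecidableEq ι] [Fintype B] [DecidableEq B] [Fintype τ] [DecidableEq τ]
variable {L : ℕ}

/-- Vertices: a root together with levelled sets of bits. -/
abbrev Vt (L : ℕ) (B : Type) := Option (Fin (L + 1) × Finset B)

/-- The edges of the learning graph. -/
def edgeOf : Finset B ⊕ (Fin L × Finset B × B) → Vt L B × Vt L B
  | Sum.inl X => (none, some (0, X))
  | Sum.inr (t, X, b) => (some (t.castSucc, X), some (t.succ, insert b X))

/-- Edge set. -/
def EE (L : ℕ) (B : Type) [Fintype B] [DecidableEq B] : Finset (Vt L B × Vt L B) :=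
  univ.image (edgeOf (B := B) (L := L))

/-- Label of a vertex. -/
def SS (tri : τ → Finset B) (slot : τ → Finset ι) : Vt L B → Finset ι
  | none => ∅
  | some (_, X) => lab tri slot X

/-- Edge weights. -/
noncomputable def wt (q : B → ℝ) : Vt L B × Vt L B → ℝ
  | (none, none) => 1
  | (none, some (_, X)) => mu q X
  | (some _, none) => 1
  | (some (_, X), some (_, Y)) => mu q X * ∏ b ∈ Y \ X, q b

lemma wt_pos (q : B → ℝ) (h0 : ∀ b, 0 < q b) (h1 : ∀ b, q b ≤ 1 / 2) (e : Vt L B × Vt L B) :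
    0 < wt q e := by
  rcases e with ⟨_ | ⟨t, X⟩, _ | ⟨t', Y⟩⟩ <;> simp only [wt]
  · norm_num
  · exact mu_pos q h0 h1 _
  · norm_num
  · exact mul_pos (mu_pos q h0 h1 _) (prod_pos fun b _ => h0 b)

/-- The first special bits. -/
def ZZ (b : Fin L → B) (t : Fin (L + 1)) : Finset B :=
  (univ.filter fun i : Fin L => i.castSucc < t).image b

lemma ZZ_zero (b : Fin L → B) : ZZ b 0 = ∅ := by
  simp [ZZ]

lemma ZZ_succ (b : Fin L → B) (t : Fin L) : ZZ b t.succ = insert (b t) (ZZ b t.castSucc) := by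
  unfold ZZ
  rw [← image_insert]
  congr 1
  ext i
  simp only [mem_filter, mem_univ, true_and, mem_insert, Fin.lt_def, Fin.ext_iff, Fin.val_castSucc,
    Fin.val_succ]
  omega

lemma ZZ_last (b : Fin L → B) : ZZ b (Fin.last L) = univ.image b := by
  unfold ZZ
  congr 1
  ext i
  simp [Fin.castSucc_lt_last]

lemma ZZ_sub (b : Fin L → B) (t : Fin (L + 1)) : ZZ b t ⊆ ZZ b (Fin.last L) := by
  rw [ZZ_last]
  exact image_subset_image (filter_subset _ _)

lemma ZZ_not_mem (b : Fin L → B) (hb : Function.Injective b) (t : Fin L) :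
    b t ∉ ZZ b t.castSucc := by
  unfold ZZ
  simp only [mem_image, mem_filter, mem_univ, true_and, not_exists, not_and]
  intro i hi h
  rw [hb h] at hi
  exact lt_irrefl _ hi

lemma ZZ_card (b : Fin L → B) : (ZZ b (Fin.last L)).card ≤ L := by
  rw [ZZ_last]
  exact card_image_le.trans (by simp)

/-- Edges of a path. -/
def pathE (b : Fin L → B) (X : Finset B) : Option (Fin L) → Vt L B × Vt L B
  | none => (none, some (0, X))
  | some t => (some (t.castSucc, X ∪ ZZ b t.castSucc), some (t.succ, X ∪ ZZ b t.succ))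

lemma pathE_mem (b : Fin L → B) (X : Finset B) (j : Option (Fin L)) : pathE b X j ∈ EE L B := by
  unfold EE
  rw [mem_image]
  rcases j with _ | t
  · exact ⟨Sum.inl X, mem_univ _, rfl⟩
  · refine ⟨Sum.inr (t, X ∪ ZZ b t.castSucc, b t), mem_univ _, ?_⟩
    simp [edgeOf, pathE, ZZ_succ]

/-- Path probability. -/
noncomputable def PP (q : B → ℝ) (b : Fin L → B) (X : Finset B) : ℝ :=
  if Disjoint X (ZZ b (Fin.last L)) then mu q X / ∏ c ∈ ZZ b (Fin.last L), (1 - q c) else 0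

/-- The flow. -/
noncomputable def fl (q : B → ℝ) (b : Fin L → B) (e : Vt L B × Vt L B) : ℝ :=
  ∑ X : Finset B, ∑ j : Option (Fin L), if pathE b X j = e then PP q b X else 0

lemma PP_nonneg (q : B → ℝ) (h0 : ∀ b, 0 < q b) (h1 : ∀ b, q b ≤ 1 / 2) (b : Fin L → B)
    (X : Finset B) : 0 ≤ PP q b X := by
  unfold PP
  split_ifs
  · exact div_nonneg (mu_pos q h0 h1 X).le (prod_nonneg fun c _ => by linarith [h1 c])
  · exact le_rfl

lemma PP_le (q : B → ℝ) (h0 : ∀ b, 0 < q b) (h1 : ∀ b, q b ≤ 1 / 2) (b : Fin L → B)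
    (X : Finset B) : PP q b X ≤ 2 ^ L * mu q X := by
  have hm := mu_pos q h0 h1 X
  unfold PP
  split_ifs
  · have hp : 0 < ∏ c ∈ ZZ b (Fin.last L), (1 - q c) :=
      prod_pos fun c _ => by linarith [h1 c]
    rw [div_le_iff₀ hp]
    have := prod_compl_ge q h1 _ (ZZ_card b)
    nlinarith
  · positivity

lemma sum_PP (q : B → ℝ) (h1 : ∀ b, q b ≤ 1 / 2) (b : Fin L → B) :
    ∑ X, PP q b X = 1 := by
  have hp : 0 < ∏ c ∈ ZZ b (Fin.last L), (1 - q c) :=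
    prod_pos fun c _ => by linarith [h1 c]
  have h := sum_mu_disjoint q (ZZ b (Fin.last L))
  have : ∀ X, PP q b X =
      (if Disjoint X (ZZ b (Fin.last L)) then mu q X else 0) / ∏ c ∈ ZZ b (Fin.last L), (1 - q c) := by
    intro X
    unfold PP
    split_ifs <;> simp
  simp_rw [this]
  rw [← sum_div, h, div_self hp.ne']

lemma fl_sum (q : B → ℝ) (b : Fin L → B) (F : Vt L B × Vt L B → ℝ) :
    ∑ e ∈ EE L B, fl q b e * F e = ∑ X, PP q b X * ∑ j, F (pathE b X j) := by
  unfold fl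
  simp_rw [sum_mul]
  rw [sum_comm]
  apply sum_congr rfl
  intro X _
  rw [sum_comm, mul_sum]
  apply sum_congr rfl
  intro j _
  rw [sum_eq_single (pathE b X j)]
  · simp
  · intro e _ he
    simp [he.symm]
  · intro h
    exact absurd (pathE_mem b X j) h

/-- Indicator of a vertex. -/
def ind (v u : Vt L B) : ℝ := if u = v then 1 else 0

lemma fl_net (q : B → ℝ) (b : Fin L → B) (v : Vt L B) :
    ((∑ e ∈ EE L B, if e.2 = v then fl q b e else 0)
      - ∑ e ∈ EE L B, if e.1 = v then fl q b e else 0) =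
    ∑ X, PP q b X * (ind v (some (Fin.last L, X ∪ ZZ b (Fin.last L))) - ind v none) := by
  have e1 := fl_sum q b (fun e => ind v e.2)
  have e2 := fl_sum q b (fun e => ind v e.1)
  have g1 : ∀ e : Vt L B × Vt L B, (if e.2 = v then fl q b e else 0) = fl q b e * ind v e.2 := by
    intro e; unfold ind; split_ifs <;> simp
  have g2 : ∀ e : Vt L B × Vt L B, (if e.1 = v then fl q b e else 0) = fl q b e * ind v e.1 := by
    intro e; unfold ind; split_ifs <;> simp
  simp_rw [g1, g2]
  rw [e1, e2, ← sum_sub_distrib]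
  apply sum_congr rfl
  intro X _
  rw [← mul_sub]
  congr 1
  rw [Fintype.sum_option, Fintype.sum_option]
  simp only [pathE]
  have f1 := Fin.sum_univ_castSucc (fun t : Fin (L + 1) => ind v (some (t, X ∪ ZZ b t)))
  have f2 := Fin.sum_univ_succ (fun t : Fin (L + 1) => ind v (some (t, X ∪ ZZ b t)))
  simp only [ZZ_zero, union_empty] at f2
  linarith

lemma fl_path (q : B → ℝ) (b : Fin L → B) (X : Finset B)
    (hX : Disjoint X (ZZ b (Fin.last L))) (j : Option (Fin L)) :
    fl q b (pathE b X j) = PP q b X := by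
  unfold fl
  rw [sum_eq_single X]
  · rw [sum_eq_single j]
    · simp
    · intro j' _ hj
      rw [if_neg]
      intro h
      apply hj
      rcases j' with _ | t' <;> rcases j with _ | t <;> simp [pathE] at h ⊢
      exact h.1.1
    · simp
  · intro X' _ hne
    apply sum_eq_zero
    intro j' _
    split_ifs with h
    · unfold PP
      rw [if_neg]
      intro hX'
      apply hne
      rcases j' with _ | t' <;> rcases j with _ | t <;> simp [pathE] at h
      · exact h
      · obtain ⟨⟨rfl, h⟩, -⟩ := h
        have d1 := disjoint_of_subset_right (ZZ_sub b t'.castSucc) hX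
        have d2 := disjoint_of_subset_right (ZZ_sub b t'.castSucc) hX'
        rw [← union_sdiff_cancel_right d1, ← union_sdiff_cancel_right d2, h]
    · rfl
  · simp


lemma C0_bound (tri : τ → Finset B) (slot : τ → Finset ι) (hs : ∀ T, (slot T).card ≤ 1)
    (ht : ∀ T, (tri T).card ≤ 3)
    (q : B → ℝ) (h0 : ∀ b, 0 < q b) (h1 : ∀ b, q b ≤ 1 / 2) :
    ∑ e ∈ EE L B, ((SS tri slot e.2 \ SS tri slot e.1).card : ℝ) * wt q e ≤
      (1 + 3 * L) * ∑ T, ∏ c ∈ tri T, q c := by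
  have hF : ∀ e : Vt L B × Vt L B,
      0 ≤ ((SS tri slot e.2 \ SS tri slot e.1).card : ℝ) * wt q e := fun e =>
    mul_nonneg (Nat.cast_nonneg _) (wt_pos q h0 h1 e).le
  have himg : ∑ e ∈ EE L B, ((SS tri slot e.2 \ SS tri slot e.1).card : ℝ) * wt q e ≤
      ∑ x : Finset B ⊕ (Fin L × Finset B × B),
        ((SS tri slot (edgeOf x).2 \ SS tri slot (edgeOf x).1).card : ℝ) * wt q (edgeOf x) := by
    unfold EE
    rw [← sum_fiberwise_of_maps_to (s := univ) (t := univ.image (edgeOf (B := B) (L := L)))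
      (g := edgeOf) (fun x _ => mem_image_of_mem _ (mem_univ x))]
    apply sum_le_sum
    intro e he
    obtain ⟨x, _, rfl⟩ := mem_image.1 he
    exact single_le_sum (f := fun x => ((SS tri slot (edgeOf x).2 \
      SS tri slot (edgeOf x).1).card : ℝ) * wt q (edgeOf x)) (fun y _ => hF (edgeOf y)) (by simp)
  refine himg.trans ?_
  rw [Fintype.sum_sum_type, add_mul, one_mul]
  apply add_le_add
  · calc _ ≤ ∑ X : Finset B, ∑ T, if tri T ⊆ X then mu q X else 0 := by
          apply sum_le_sum
          intro X _
          simp only [edgeOf, SS, wt, sdiff_empty]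
          refine (mul_le_mul_of_nonneg_right (card_lab_le tri slot hs X)
            (mu_pos q h0 h1 X).le).trans (le_of_eq ?_)
          rw [sum_mul]
          simp
      _ = _ := by
          rw [sum_comm]
          simp_rw [sum_mu_superset]
  · rw [Fintype.sum_prod_type]
    have hstep : ∀ (t : Fin L), ∑ y : Finset B × B,
        ((SS tri slot (edgeOf (Sum.inr (t, y) : Finset B ⊕ (Fin L × Finset B × B))).2 \
          SS tri slot (edgeOf (Sum.inr (t, y) : Finset B ⊕ (Fin L × Finset B × B))).1).card : ℝ) *
          wt q (edgeOf (Sum.inr (t, y))) ≤ 3 * ∑ T, ∏ c ∈ tri T, q c := by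
      intro t
      rw [Fintype.sum_prod_type]
      calc _ ≤ ∑ X : Finset B, ∑ b : B, ∑ T,
            if b ∈ tri T then (if (tri T).erase b ⊆ X then mu q X else 0) * q b else 0 := by
            apply sum_le_sum
            intro X _
            apply sum_le_sum
            intro b _
            simp only [edgeOf, SS, wt]
            by_cases hb : b ∈ X
            · rw [insert_eq_of_mem hb]
              simp only [sdiff_self, card_empty, Nat.cast_zero, zero_mul, bot_eq_empty]
              apply sum_nonneg
              intro T _
              split_ifs
              · exact mul_nonneg (mu_pos q h0 h1 X).le (h0 b).le
              · simp
              · exact le_rfl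
            · have : insert b X \ X = {b} := by
                rw [insert_sdiff_of_notMem _ hb, sdiff_self]
                rfl
              rw [this, prod_singleton]
              refine (mul_le_mul_of_nonneg_right (card_lab_sdiff_le tri slot hs X b)
                (mul_pos (mu_pos q h0 h1 X) (h0 b)).le).trans (le_of_eq ?_)
              rw [sum_mul]
              apply sum_congr rfl
              intro T _
              split_ifs <;> simp_all
        _ = ∑ T, ∑ b : B, if b ∈ tri T then ∏ c ∈ tri T, q c else 0 := by
            rw [sum_comm]
            simp_rw [sum_comm (s := (univ : Finset (Finset B)))]
            rw [sum_comm]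
            apply sum_congr rfl
            intro T _
            apply sum_congr rfl
            intro b _
            split_ifs with hb
            · rw [← sum_mul, sum_mu_superset, prod_erase_mul _ _ hb]
            · simp
        _ ≤ _ := by
            rw [mul_sum]
            apply sum_le_sum
            intro T _
            rw [← sum_filter, sum_const, nsmul_eq_mul, filter_mem_eq_inter, univ_inter]
            apply mul_le_mul_of_nonneg_right
            · exact_mod_cast ht T
            · exact prod_nonneg fun c _ => (h0 c).le
    calc _ ≤ ∑ t : Fin L, 3 * ∑ T, ∏ c ∈ tri T, q c := sum_le_sum fun t _ => hstep t
      _ = _ := by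
        rw [sum_const, card_univ, Fintype.card_fin, nsmul_eq_mul]
        ring

lemma C1_bound (tri : τ → Finset B) (slot : τ → Finset ι) (hs : ∀ T, (slot T).card ≤ 1)
    (q : B → ℝ) (h0 : ∀ b, 0 < q b) (h1 : ∀ b, q b ≤ 1 / 2)
    (b : Fin L → B) (hb : Function.Injective b) :
    ∑ e ∈ EE L B, ((SS tri slot e.2 \ SS tri slot e.1).card : ℝ) * fl q b e ^ 2 / wt q e ≤
      4 ^ L * (∑ T, ∏ c ∈ tri T, q c + ∑ t : Fin L, (∏ c ∈ ZZ b t.succ, q c)⁻¹ *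
        ∑ T, if b t ∈ tri T then ∏ c ∈ tri T \ ZZ b t.succ, q c else 0) := by
  have hsum := fl_sum q b (fun e => ((SS tri slot e.2 \ SS tri slot e.1).card : ℝ) *
    fl q b e / wt q e)
  have hre : ∀ e : Vt L B × Vt L B,
      ((SS tri slot e.2 \ SS tri slot e.1).card : ℝ) * fl q b e ^ 2 / wt q e =
      fl q b e * (((SS tri slot e.2 \ SS tri slot e.1).card : ℝ) * fl q b e / wt q e) := by
    intro e; ring
  simp_rw [hre]
  rw [hsum]
  have h4 : (4 : ℝ) ^ L = 2 ^ L * 2 ^ L := by rw [← mul_pow]; norm_num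
  have hX : ∀ X, PP q b X * ∑ j, ((SS tri slot (pathE b X j).2 \
        SS tri slot (pathE b X j).1).card : ℝ) * fl q b (pathE b X j) / wt q (pathE b X j) ≤
      4 ^ L * ((∑ T, if tri T ⊆ X then mu q X else 0) +
        ∑ t : Fin L, (∏ c ∈ ZZ b t.succ, q c)⁻¹ *
        ∑ T, if b t ∈ tri T then (if tri T \ ZZ b t.succ ⊆ X then mu q X else 0) else 0) := by
    intro X
    have hm := mu_pos q h0 h1 X
    have hq : ∀ Z : Finset B, 0 < ∏ c ∈ Z, q c := fun Z => prod_pos fun c _ => h0 c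
    have hR : 0 ≤ (∑ T, if tri T ⊆ X then (1 : ℝ) else 0) +
        ∑ t : Fin L, (∏ c ∈ ZZ b t.succ, q c)⁻¹ *
        ∑ T, if b t ∈ tri T ∧ tri T \ ZZ b t.succ ⊆ X then (1 : ℝ) else 0 := by
      apply add_nonneg
      · exact sum_nonneg fun T _ => by split_ifs <;> norm_num
      · refine sum_nonneg fun t _ => mul_nonneg (inv_nonneg.2 (hq _).le) ?_
        exact sum_nonneg fun T _ => by split_ifs <;> norm_num
    have hRe : 4 ^ L * ((∑ T, if tri T ⊆ X then mu q X else 0) +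
        ∑ t : Fin L, (∏ c ∈ ZZ b t.succ, q c)⁻¹ *
        ∑ T, if b t ∈ tri T then (if tri T \ ZZ b t.succ ⊆ X then mu q X else 0) else 0) =
        (2 ^ L * mu q X) * (2 ^ L * ((∑ T, if tri T ⊆ X then (1 : ℝ) else 0) +
        ∑ t : Fin L, (∏ c ∈ ZZ b t.succ, q c)⁻¹ *
        ∑ T, if b t ∈ tri T ∧ tri T \ ZZ b t.succ ⊆ X then (1 : ℝ) else 0)) := by
      have i1 : (∑ T, if tri T ⊆ X then mu q X else 0) =
          mu q X * ∑ T, if tri T ⊆ X then (1 : ℝ) else 0 := by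
        rw [mul_sum]; simp
      have i2 : ∀ t : Fin L, (∑ T, if b t ∈ tri T then
          (if tri T \ ZZ b t.succ ⊆ X then mu q X else 0) else 0) =
          mu q X * ∑ T, if b t ∈ tri T ∧ tri T \ ZZ b t.succ ⊆ X then (1 : ℝ) else 0 := by
        intro t
        rw [mul_sum]
        apply sum_congr rfl
        intro T _
        split_ifs <;> simp_all
      simp_rw [i1, i2, mul_left_comm _ (mu q X) _]
      rw [← mul_sum, h4]
      ring
    rw [hRe]
    by_cases hd : Disjoint X (ZZ b (Fin.last L))
    · apply mul_le_mul (PP_le q h0 h1 b X) _ _ (by positivity)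
      · simp_rw [fl_path q b X hd]
        rw [Fintype.sum_option, mul_add]
        apply add_le_add
        · simp only [pathE, SS, wt, sdiff_empty]
          rw [div_le_iff₀ hm]
          calc _ ≤ (∑ T, if tri T ⊆ X then (1 : ℝ) else 0) * (2 ^ L * mu q X) :=
                mul_le_mul (card_lab_le tri slot hs X) (PP_le q h0 h1 b X)
                  (PP_nonneg q h0 h1 b X) (sum_nonneg fun T _ => by split_ifs <;> norm_num)
            _ = _ := by ring
        · rw [mul_sum]
          apply sum_le_sum
          intro t _
          have hnX : b t ∉ X := by
            intro h
            refine (disjoint_left.1 hd) h ?_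
            rw [ZZ_last]
            exact mem_image_of_mem _ (mem_univ t)
          have hnZ := ZZ_not_mem b hb t
          have hnU : b t ∉ X ∪ ZZ b t.castSucc := by
            rw [mem_union]; tauto
          have hU : X ∪ ZZ b t.succ = insert (b t) (X ∪ ZZ b t.castSucc) := by
            rw [ZZ_succ, union_insert]
          have hZ : ∏ c ∈ ZZ b t.succ, q c = q (b t) * ∏ c ∈ ZZ b t.castSucc, q c := by
            rw [ZZ_succ, prod_insert hnZ]
          have hw : wt q (pathE b X (some t)) = mu q (X ∪ ZZ b t.castSucc) * q (b t) := by
            simp only [pathE, wt]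
            rw [hU, insert_sdiff_of_notMem _ hnU, sdiff_self]
            simp
          have hl : ((SS tri slot (pathE b X (some t)).2 \
              SS tri slot (pathE b X (some t)).1).card : ℝ) ≤
              ∑ T, if b t ∈ tri T ∧ tri T \ ZZ b t.succ ⊆ X then (1 : ℝ) else 0 := by
            simp only [pathE, SS]
            rw [hU]
            refine (card_lab_sdiff_le tri slot hs _ _).trans ?_
            apply sum_le_sum
            intro T _
            by_cases hc : b t ∈ tri T ∧ (tri T).erase (b t) ⊆ X ∪ ZZ b t.castSucc
            · rw [if_pos hc, if_pos]
              refine ⟨hc.1, ?_⟩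
              intro c hcm
              rw [mem_sdiff, ZZ_succ, mem_insert, not_or] at hcm
              have := hc.2 (mem_erase.2 ⟨hcm.2.1, hcm.1⟩)
              rw [mem_union] at this
              tauto
            · rw [if_neg hc]
              split_ifs <;> norm_num
          have hge := mu_union_ge q h0 h1
            (disjoint_of_subset_right (ZZ_sub b t.castSucc) hd)
          have hPP := PP_le q h0 h1 b X
          have hmU := mu_pos q h0 h1 (X ∪ ZZ b t.castSucc)
          have hratio : PP q b X / wt q (pathE b X (some t)) ≤
              2 ^ L * (∏ c ∈ ZZ b t.succ, q c)⁻¹ := by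
            rw [hw, hZ, div_le_iff₀ (mul_pos hmU (h0 _))]
            have hqz := hq (ZZ b t.castSucc)
            have hqb := h0 (b t)
            have : 2 ^ L * (q (b t) * ∏ c ∈ ZZ b t.castSucc, q c)⁻¹ *
                (mu q (X ∪ ZZ b t.castSucc) * q (b t)) =
                2 ^ L * (mu q (X ∪ ZZ b t.castSucc) / ∏ c ∈ ZZ b t.castSucc, q c) := by
              field_simp
            rw [this]
            refine hPP.trans ?_
            gcongr
            rw [le_div_iff₀ hqz]
            exact hge
          rw [mul_div_assoc]
          calc _ ≤ (∑ T, if b t ∈ tri T ∧ tri T \ ZZ b t.succ ⊆ X then (1 : ℝ) else 0) *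
                (2 ^ L * (∏ c ∈ ZZ b t.succ, q c)⁻¹) :=
                mul_le_mul hl hratio (div_nonneg (PP_nonneg q h0 h1 b X) (wt_pos q h0 h1 _).le)
                  (sum_nonneg fun T _ => by split_ifs <;> norm_num)
            _ = _ := by ring
      · refine sum_nonneg fun j _ => div_nonneg (mul_nonneg (Nat.cast_nonneg _) ?_)
          (wt_pos q h0 h1 _).le
        rw [fl_path q b X hd]
        exact PP_nonneg q h0 h1 b X
    · have : PP q b X = 0 := by unfold PP; rw [if_neg hd]
      rw [this, zero_mul]
      positivity
  refine (sum_le_sum fun X _ => hX X).trans (le_of_eq ?_)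
  rw [← mul_sum, sum_add_distrib]
  congr 2
  · rw [sum_comm]
    simp_rw [sum_mu_superset]
  · rw [sum_comm]
    apply sum_congr rfl
    intro t _
    rw [← mul_sum, sum_comm]
    congr 1
    apply sum_congr rfl
    intro T _
    split_ifs
    · exact sum_mu_superset _ _
    · simp

/-- The abstract construction. -/
theorem exists_lg [Fintype ι] (f : (ι → Bool) → Bool)
    (tri : τ → Finset B) (slot : τ → Finset ι) (hs : ∀ T, (slot T).card ≤ 1)
    (ht : ∀ T, (tri T).card ≤ 3)
    (q : B → ℝ) (h0 : ∀ b, 0 < q b) (h1 : ∀ b, q b ≤ 1 / 2)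
    (b : (ι → Bool) → Fin L → B) (hb : ∀ y, f y = true → Function.Injective (b y))
    (hcert : ∀ y, f y = true → ∀ z : ι → Bool,
      (∀ T, tri T ⊆ univ.image (b y) → ∀ i ∈ slot T, z i = y i) → f z = true)
    (K0 K1 : ℝ) (hK1 : 0 ≤ K1)
    (hK0 : (1 + 3 * L) * ∑ T, ∏ c ∈ tri T, q c ≤ K0)
    (hC1 : ∀ y, f y = true →
      4 ^ L * (∑ T, ∏ c ∈ tri T, q c + ∑ t : Fin L, (∏ c ∈ ZZ (b y) t.succ, q c)⁻¹ *
        ∑ T, if b y t ∈ tri T then ∏ c ∈ tri T \ ZZ (b y) t.succ, q c else 0) ≤ K1) :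
    ∃ G : LearningGraph (Set.univ : Set (ι → Bool)) f, G.complexity ≤ Real.sqrt (K0 * K1) := by
  classical
  let G : LearningGraph (Set.univ : Set (ι → Bool)) f :=
    { V := Vt L B
      root := none
      E := EE L B
      rank := fun v => match v with
        | none => 0
        | some (t, _) => t.val + 1
      acyclic := by
        intro e he
        obtain ⟨x, _, rfl⟩ := mem_image.1 he
        rcases x with X | ⟨t, X, c⟩ <;> simp [edgeOf]
      S := SS tri slot
      S_root := rfl
      S_mono := by
        intro e he
        obtain ⟨x, _, rfl⟩ := mem_image.1 he
        rcases x with X | ⟨t, X, c⟩ <;> simp only [edgeOf, SS]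
        · exact empty_subset _
        · exact lab_mono _ _ (subset_insert _ _)
      w := wt q
      w_pos := fun e _ => wt_pos q h0 h1 e
      p := fun y => fl q (b y)
      flow_root := by
        intro y _ _
        have h := fl_net q (b y) none
        have h2 := sum_PP q h1 (b y)
        simp only [ind, reduceCtorEq, if_false, if_true, zero_sub, mul_neg, mul_one,
          sum_neg_distrib, h2] at h
        linarith
      flow_cons := by
        intro y _ hy v hv
        rw [fl_net q (b y) v]
        have hi : ind v (none : Vt L B) = 0 := by
          unfold ind; rw [if_neg (Ne.symm hv)]
        simp only [hi, sub_zero]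
        have hnn : ∀ X, 0 ≤ PP q (b y) X *
            ind v (some (Fin.last L, X ∪ ZZ (b y) (Fin.last L))) := by
          intro X
          apply mul_nonneg (PP_nonneg q h0 h1 _ X)
          unfold ind
          split_ifs <;> norm_num
        rcases (sum_nonneg fun X (_ : X ∈ univ) => hnn X).eq_or_lt with h | h
        · exact Or.inl h.symm
        · right
          refine ⟨h, ?_⟩
          obtain ⟨X, _, hXp⟩ := exists_ne_zero_of_sum_ne_zero h.ne'
          have hv2 : some (Fin.last L, X ∪ ZZ (b y) (Fin.last L)) = v := by
            by_contra hne
            apply hXp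
            unfold ind
            rw [if_neg hne, mul_zero]
          intro z _ hz
          apply hcert y hy z
          intro T hT i hi
          apply hz
          rw [← hv2]
          simp only [SS, lab, mem_biUnion, mem_filter, mem_univ, true_and]
          refine ⟨T, ?_, hi⟩
          rw [ZZ_last]
          exact hT.trans subset_union_right }
  refine ⟨G, ?_⟩
  unfold LearningGraph.complexity
  apply Real.sqrt_le_sqrt
  have c0 : G.C0 ≤ K0 := (C0_bound (L := L) tri slot hs ht q h0 h1).trans hK0
  have c1 : G.C1 ≤ K1 := by
    unfold LearningGraph.C1
    apply Real.iSup_le _ hK1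
    rintro ⟨y, hy⟩
    exact (C1_bound tri slot hs q h0 h1 (b y) (hb y hy.2)).trans (hC1 y hy.2)
  have c1n : 0 ≤ G.C1 := by
    unfold LearningGraph.C1
    apply Real.iSup_nonneg
    rintro ⟨y, hy⟩
    exact sum_nonneg fun e _ => div_nonneg (mul_nonneg (Nat.cast_nonneg _) (sq_nonneg _))
      (wt_pos q h0 h1 e).le
  have c0n : 0 ≤ G.C0 :=
    sum_nonneg fun e _ => mul_nonneg (Nat.cast_nonneg _) (wt_pos q h0 h1 e).le
  exact mul_le_mul c0 c1 c1n (c0n.trans c0)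

end graph

section concrete
variable {k m n : ℕ}

/-- Bits: membership bits and pair bits. -/
abbrev Bit (k m n : ℕ) := (Fin k × Fin n) ⊕ (Fin m × Fin n × Fin n)

/-- The three bits needed to load a pair. -/
def tri3 (src tgt : Fin m → Fin k) (T : Fin m × Fin n × Fin n) : Finset (Bit k m n) :=
  {Sum.inl (src T.1, T.2.1), Sum.inl (tgt T.1, T.2.2), Sum.inr T}

/-- The edge slot of a pair. -/
def slot3 (T : Fin m × Fin n × Fin n) : Finset (EdgeSlot n) :=
  univ.filter fun x => (x.1.1 = T.2.1 ∧ x.1.2 = T.2.2) ∨ (x.1.1 = T.2.2 ∧ x.1.2 = T.2.1)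

/-- Bit probabilities. -/
def qq (ρ s : ℝ) : Bit k m n → ℝ := Sum.elim (fun _ => ρ) (fun _ => s)

/-- Special bits of a copy. -/
def bits (src tgt : Fin m → Fin k) (ψ : Fin k → Fin n) : Fin (k + m) → Bit k m n :=
  Fin.append (fun i => Sum.inl (i, ψ i)) (fun e => Sum.inr (e, ψ (src e), ψ (tgt e)))

lemma slot3_card (T : Fin m × Fin n × Fin n) : (slot3 T).card ≤ 1 := by
  rw [card_le_one]
  rintro ⟨⟨a, b⟩, hab⟩ h1 ⟨⟨c, d⟩, hcd⟩ h2
  simp only [slot3, mem_filter, mem_univ, true_and] at h1 h2 hab hcd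
  simp only [Subtype.mk.injEq, Prod.mk.injEq]
  rcases h1 with ⟨rfl, rfl⟩ | ⟨rfl, rfl⟩ <;> rcases h2 with ⟨rfl, rfl⟩ | ⟨rfl, rfl⟩
  · simp
  · exact absurd hab (not_lt.2 hcd.le)
  · exact absurd hab (not_lt.2 hcd.le)
  · simp

lemma bits_inj (src tgt : Fin m → Fin k) (ψ : Fin k → Fin n) :
    Function.Injective (bits src tgt ψ) := by
  intro x y
  refine Fin.addCases (fun i => ?_) (fun i => ?_) x <;>
  refine Fin.addCases (fun j => ?_) (fun j => ?_) y <;>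
  simp [bits] <;> tauto

lemma prod_tri3 (src tgt : Fin m → Fin k) (hne : ∀ e, src e ≠ tgt e) (ρ s : ℝ)
    (T : Fin m × Fin n × Fin n) : ∏ c ∈ tri3 src tgt T, qq ρ s c = ρ ^ 2 * s := by
  unfold tri3
  rw [prod_insert, prod_insert, prod_singleton]
  · simp [qq]; ring
  · simp
  · simp [hne]

lemma prod_bits (src tgt : Fin m → Fin k) (ψ : Fin k → Fin n) (ρ s : ℝ) :
    ∏ c ∈ ZZ (bits src tgt ψ) (Fin.last _), qq ρ s c = ρ ^ k * s ^ m := by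
  rw [ZZ_last, prod_image (fun x _ y _ h => bits_inj src tgt ψ h), Fin.prod_univ_add]
  simp [bits, qq]

lemma ZZ_vertex (src tgt : Fin m → Fin k) (ψ : Fin k → Fin n) (i : Fin k) :
    ZZ (bits src tgt ψ) (Fin.castAdd m i).succ ⊆
      univ.image (fun j => (Sum.inl (j, ψ j) : Bit k m n)) := by
  intro c hc
  simp only [ZZ, mem_image, mem_filter, mem_univ, true_and] at hc ⊢
  obtain ⟨x, hx, rfl⟩ := hc
  revert hx
  refine Fin.addCases (fun j => ?_) (fun j => ?_) x
  · intro _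
    exact ⟨j, by simp [bits]⟩
  · intro hx
    rw [Fin.lt_def] at hx
    simp only [Fin.val_castSucc, Fin.val_natAdd, Fin.val_succ, Fin.val_castAdd] at hx
    have := i.2
    omega

lemma qq_pos {ρ s : ℝ} (h1 : 0 < ρ) (h2 : 0 < s) (c : Bit k m n) : 0 < qq ρ s c := by
  rcases c with c | c <;> simpa [qq]

lemma qq_le {ρ s : ℝ} (h1 : ρ ≤ 1 / 2) (h2 : s ≤ 1 / 2) (c : Bit k m n) : qq ρ s c ≤ 1 / 2 := by
  rcases c with c | c <;> simpa only [qq, Sum.elim_inl, Sum.elim_inr]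

lemma vertex_stage (src tgt : Fin m → Fin k) (ψ : Fin k → Fin n) (ρ s : ℝ)
    (hρ : 0 < ρ) (hρ1 : ρ ≤ 1 / 2) (hs : 0 < s) (hs1 : s ≤ 1 / 2) (i : Fin k) :
    (∏ c ∈ ZZ (bits src tgt ψ) (Fin.castAdd m i).succ, qq ρ s c)⁻¹ *
      (∑ T, if bits src tgt ψ (Fin.castAdd m i) ∈ tri3 src tgt T then
        ∏ c ∈ tri3 src tgt T \ ZZ (bits src tgt ψ) (Fin.castAdd m i).succ, qq ρ s c else 0) ≤
      (ρ ^ k)⁻¹ * (m * (2 * (n * (ρ * s) + s))) := by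
  have hq0 := fun c : Bit k m n => qq_pos hρ hs c
  have hq1 := fun c : Bit k m n => qq_le (k := k) (m := m) (n := n) hρ1 hs1 c
  have hsub := ZZ_vertex src tgt ψ i
  set Z := ZZ (bits src tgt ψ) (Fin.castAdd m i).succ with hZ
  have hprod : ρ ^ k ≤ ∏ c ∈ Z, qq ρ s c := by
    refine le_trans (le_of_eq ?_) (prod_q_anti (qq ρ s) hq0 hq1 hsub)
    rw [prod_image (fun x _ y _ h => by simpa using (congrArg (Sum.elim Prod.fst (fun _ => x)) h))]
    simp [qq]
  apply mul_le_mul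
  · exact inv_anti₀ (by positivity) hprod
  · have hterm : ∀ T : Fin m × Fin n × Fin n,
        (if bits src tgt ψ (Fin.castAdd m i) ∈ tri3 src tgt T then
          ∏ c ∈ tri3 src tgt T \ Z, qq ρ s c else 0) ≤
        (if T.2.1 = ψ (src T.1) then (ρ * s + if T.2.2 = ψ (tgt T.1) then s else 0) else 0) +
        (if T.2.2 = ψ (tgt T.1) then (ρ * s + if T.2.1 = ψ (src T.1) then s else 0) else 0) := by
      rintro ⟨e, a, c⟩
      have hr : (Sum.inr (e, a, c) : Bit k m n) ∉ Z := fun h => by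
        have := hsub h
        simp at this
      have hl : ∀ j d, (Sum.inl (j, d) : Bit k m n) ∈ Z → d = ψ j := fun j d h => by
        have := hsub h
        simp only [mem_image, mem_univ, true_and, Sum.inl.injEq, Prod.mk.injEq] at this
        obtain ⟨j', rfl, rfl⟩ := this
        rfl
      have hps : 0 < ρ * s := mul_pos hρ hs
      have b1 : ∏ x ∈ tri3 src tgt (e, a, c) \ Z, qq ρ s x ≤ s := by
        refine (prod_q_anti (qq ρ s) hq0 hq1 (Z := {Sum.inr (e, a, c)}) ?_).trans ?_
        · rw [singleton_subset_iff, mem_sdiff]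
          exact ⟨by simp [tri3], hr⟩
        · simp [qq]
      have b2 : a ≠ ψ (src e) → ∏ x ∈ tri3 src tgt (e, a, c) \ Z, qq ρ s x ≤ ρ * s := by
        intro hne
        refine (prod_q_anti (qq ρ s) hq0 hq1
          (Z := {Sum.inl (src e, a), Sum.inr (e, a, c)}) ?_).trans ?_
        · intro x hx
          simp only [mem_insert, mem_singleton] at hx
          rw [mem_sdiff]
          rcases hx with rfl | rfl
          · exact ⟨by simp [tri3], fun h => hne (hl _ _ h)⟩
          · exact ⟨by simp [tri3], hr⟩
        · rw [prod_pair (by simp)]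
          simp [qq]
      have b3 : c ≠ ψ (tgt e) → ∏ x ∈ tri3 src tgt (e, a, c) \ Z, qq ρ s x ≤ ρ * s := by
        intro hne
        refine (prod_q_anti (qq ρ s) hq0 hq1
          (Z := {Sum.inl (tgt e, c), Sum.inr (e, a, c)}) ?_).trans ?_
        · intro x hx
          simp only [mem_insert, mem_singleton] at hx
          rw [mem_sdiff]
          rcases hx with rfl | rfl
          · exact ⟨by simp [tri3], fun h => hne (hl _ _ h)⟩
          · exact ⟨by simp [tri3], hr⟩
        · rw [prod_pair (by simp)]
          simp [qq]
      have hmem : bits src tgt ψ (Fin.castAdd m i) ∈ tri3 src tgt (e, a, c) →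
          a = ψ (src e) ∨ c = ψ (tgt e) := by
        simp only [bits, Fin.append_left, tri3, mem_insert, mem_singleton, Sum.inl.injEq,
          Prod.mk.injEq, reduceCtorEq, or_false]
        rintro (⟨rfl, rfl⟩ | ⟨rfl, rfl⟩)
        · exact Or.inl rfl
        · exact Or.inr rfl
      by_cases ha : a = ψ (src e) <;> by_cases hc : c = ψ (tgt e) <;>
        by_cases hm : bits src tgt ψ (Fin.castAdd m i) ∈ tri3 src tgt (e, a, c)
      · simp only [if_pos ha, if_pos hc, if_pos hm]; linarith
      · simp only [if_pos ha, if_pos hc, if_neg hm]; linarith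
      · simp only [if_pos ha, if_neg hc, if_pos hm]; linarith [b3 hc]
      · simp only [if_pos ha, if_neg hc, if_neg hm]; linarith
      · simp only [if_neg ha, if_pos hc, if_pos hm]; linarith [b2 ha]
      · simp only [if_neg ha, if_pos hc, if_neg hm]; linarith
      · exact absurd (hmem hm) (by tauto)
      · simp only [if_neg ha, if_neg hc, if_neg hm]; linarith
    refine (sum_le_sum fun T _ => hterm T).trans (le_of_eq ?_)
    rw [sum_add_distrib, Fintype.sum_prod_type, Fintype.sum_prod_type]
    simp_rw [Fintype.sum_prod_type]
    have e1 : ∀ e : Fin m, (∑ a : Fin n, ∑ c : Fin n, if a = ψ (src e) then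
        (ρ * s + if c = ψ (tgt e) then s else 0) else 0) = n * (ρ * s) + s := by
      intro e
      rw [sum_comm]
      simp [sum_add_distrib]
    have e2 : ∀ e : Fin m, (∑ a : Fin n, ∑ c : Fin n, if c = ψ (tgt e) then
        (ρ * s + if a = ψ (src e) then s else 0) else 0) = n * (ρ * s) + s := by
      intro e
      simp [sum_add_distrib]
    simp_rw [e1, e2]
    simp
    ring
  · refine sum_nonneg fun T _ => ?_
    split_ifs
    · exact prod_nonneg fun c _ => (hq0 c).le
    · exact le_rfl
  · positivity

lemma edge_stage (src tgt : Fin m → Fin k) (ψ : Fin k → Fin n) (ρ s : ℝ)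
    (hρ : 0 < ρ) (hρ1 : ρ ≤ 1 / 2) (hs : 0 < s) (hs1 : s ≤ 1 / 2) (i : Fin m) :
    (∏ c ∈ ZZ (bits src tgt ψ) (Fin.natAdd k i).succ, qq ρ s c)⁻¹ *
      (∑ T, if bits src tgt ψ (Fin.natAdd k i) ∈ tri3 src tgt T then
        ∏ c ∈ tri3 src tgt T \ ZZ (bits src tgt ψ) (Fin.natAdd k i).succ, qq ρ s c else 0) ≤
      (ρ ^ k * s ^ m)⁻¹ := by
  have hq0 := fun c : Bit k m n => qq_pos hρ hs c
  have hq1 := fun c : Bit k m n => qq_le (k := k) (m := m) (n := n) hρ1 hs1 c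
  have hprod := prod_q_anti (qq ρ s) hq0 hq1 (ZZ_sub (bits src tgt ψ) (Fin.natAdd k i).succ)
  rw [prod_bits] at hprod
  rw [← mul_one (ρ ^ k * s ^ m)⁻¹]
  apply mul_le_mul
  · exact inv_anti₀ (by positivity) hprod
  · rw [sum_eq_single (i, ψ (src i), ψ (tgt i))]
    · split_ifs
      · exact prod_q_le_one _ hq0 hq1 _
      · norm_num
    · intro T _ hT
      rw [if_neg]
      simp only [bits, Fin.append_right, tri3, mem_insert, mem_singleton, Sum.inr.injEq,
        reduceCtorEq, false_or]
      exact fun h => hT h.symm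
    · simp
  · refine sum_nonneg fun T _ => ?_
    split_ifs
    · exact prod_nonneg fun c _ => (hq0 c).le
    · exact le_rfl
  · positivity

theorem exists_lg_concrete (H : SimpleGraph (Fin k)) (src tgt : Fin m → Fin k)
    (hne : ∀ e, src e ≠ tgt e)
    (hcov : ∀ i j, H.Adj i j → ∃ e, (src e = i ∧ tgt e = j) ∨ (src e = j ∧ tgt e = i))
    (hn : 1 ≤ n) (ρ s : ℝ)
    (hρ : 0 < ρ) (hρ1 : ρ ≤ 1 / 2) (hs : 0 < s) (hs1 : s ≤ 1 / 2) :
    ∃ G : LearningGraph (Set.univ : Set (EdgeSlot n → Bool)) (subgraphFn H n),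
      G.complexity ≤ Real.sqrt (((1 + 3 * ((k + m : ℕ) : ℝ)) * (m * (n * n) * (ρ ^ 2 * s))) *
        (4 ^ (k + m) * (m * (n * n) * (ρ ^ 2 * s) +
          (k * ((ρ ^ k)⁻¹ * (m * (2 * (n * (ρ * s) + s)))) + m * (ρ ^ k * s ^ m)⁻¹)))) := by
  have hψ : ∀ y : EdgeSlot n → Bool, ∃ ψ : Fin k → Fin n, subgraphFn H n y = true →
      Function.Injective ψ ∧ ∀ i j : Fin k, H.Adj i j → ∀ q : EdgeSlot n,
      ((q.1.1 = ψ i ∧ q.1.2 = ψ j) ∨ (q.1.1 = ψ j ∧ q.1.2 = ψ i)) → y q = true := by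
    intro y
    by_cases h : HasHCopy H y
    · obtain ⟨φ, hφ⟩ := h
      exact ⟨φ, fun _ => ⟨φ.injective, hφ⟩⟩
    · refine ⟨fun _ => ⟨0, hn⟩, fun h2 => ?_⟩
      simp [subgraphFn, h] at h2
  choose ψ hψ using hψ
  have htot : ∑ T : Fin m × Fin n × Fin n, ∏ c ∈ tri3 src tgt T, qq ρ s c =
      m * (n * n) * (ρ ^ 2 * s) := by
    simp_rw [prod_tri3 src tgt hne ρ s]
    simp
  apply exists_lg (L := k + m) (subgraphFn H n) (tri3 src tgt) slot3 slot3_card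
    (fun T => card_le_three) (qq ρ s) (qq_pos hρ hs) (qq_le hρ1 hs1)
    (fun y => bits src tgt (ψ y)) (fun y _ => bits_inj src tgt (ψ y))
  · intro y hy z hz
    have hcopy : HasHCopy H z := by
      refine ⟨⟨ψ y, (hψ y hy).1⟩, ?_⟩
      intro i j hij x hx
      simp only [Function.Embedding.coeFn_mk] at hx
      obtain ⟨e, he⟩ := hcov i j hij
      have hzy : z x = y x := by
        apply hz (e, ψ y (src e), ψ y (tgt e))
        · intro c hc
          simp only [tri3, mem_insert, mem_singleton] at hc
          simp only [mem_image, mem_univ, true_and]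
          rcases hc with rfl | rfl | rfl
          · exact ⟨Fin.castAdd m (src e), by simp [bits]⟩
          · exact ⟨Fin.castAdd m (tgt e), by simp [bits]⟩
          · exact ⟨Fin.natAdd k e, by simp [bits]⟩
        · simp only [slot3, mem_filter, mem_univ, true_and]
          rcases he with ⟨rfl, rfl⟩ | ⟨rfl, rfl⟩ <;> tauto
      rw [hzy]
      exact (hψ y hy).2 i j hij x hx
    simp [subgraphFn, hcopy]
  · positivity
  · rw [htot]
  · intro y hy
    rw [htot]
    gcongr
    rw [Fin.sum_univ_add]
    apply add_le_add
    · refine (sum_le_sum fun i _ =>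
        vertex_stage src tgt (ψ y) ρ s hρ hρ1 hs hs1 i).trans (le_of_eq ?_)
      simp
    · refine (sum_le_sum fun i _ =>
        edge_stage src tgt (ψ y) ρ s hρ hρ1 hs hs1 i).trans (le_of_eq ?_)
      simp

end concrete

lemma exists_orient {k m : ℕ} (H : SimpleGraph (Fin k)) [DecidableRel H.Adj]
    (hm : H.edgeFinset.card = m) :
    ∃ src tgt : Fin m → Fin k, (∀ e, H.Adj (src e) (tgt e)) ∧
      ∀ i j, H.Adj i j → ∃ e, (src e = i ∧ tgt e = j) ∨ (src e = j ∧ tgt e = i) := by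
  have hq := H.edgeFinset.equivFinOfCardEq hm
  refine ⟨fun e => (Quot.out (hq.symm e).1).1, fun e => (Quot.out (hq.symm e).1).2, ?_, ?_⟩
  · intro e
    have h := (hq.symm e).2
    rw [SimpleGraph.mem_edgeFinset] at h
    rw [← SimpleGraph.mem_edgeSet]
    convert h using 1
    exact Quot.out_eq _
  · intro i j hij
    refine ⟨hq ⟨s(i, j), by simpa using hij⟩, ?_⟩
    simp only [Equiv.symm_apply_apply]
    have h : s((Quot.out s(i, j)).1, (Quot.out s(i, j)).2) = s(i, j) := Quot.out_eq _
    simpa [Prod.ext_iff] using h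

end LGaux

/-- **Theorem 1 of the paper.** For a fixed graph `H` on `k ≥ 3` vertices with `m ≥ 1` edges,
there is a learning graph for the subgraph-detection function `f_{H,n}` of complexity
`O(n^{2 - 2/(k+1) - k/((k+1)(m+1))})`. -/
theorem subgraph_learningGraph_direct (k m : ℕ) (hk : 3 ≤ k)
    (H : SimpleGraph (Fin k)) [DecidableRel H.Adj]
    (hm : H.edgeFinset.card = m) (hm1 : 1 ≤ m) :
    ∃ c : ℝ, 0 < c ∧ ∀ n : ℕ, 1 ≤ n →
      ∃ G : LearningGraph (Set.univ : Set (EdgeSlot n → Bool)) (subgraphFn H n),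
        G.complexity ≤
          c * (n : ℝ) ^ ((2 : ℝ) - 2 / (k + 1) - k / ((k + 1) * (m + 1))) := by
  obtain ⟨src, tgt, hadj, hcov⟩ := LGaux.exists_orient H hm
  have hne : ∀ e, src e ≠ tgt e := fun e => (hadj e).ne
  have hmR : (1 : ℝ) ≤ m := by exact_mod_cast hm1
  set c0 : ℝ := (1 + 3 * ((k + m : ℕ) : ℝ)) * m with hc0
  set c1 : ℝ := 4 ^ (k + m) * (m + (k * (2 ^ k * (m * 2)) + m * 2 ^ (k + m))) with hc1
  have hc0p : 0 < c0 := by positivity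
  have hc1p : 0 < c1 := by positivity
  refine ⟨Real.sqrt (c0 * c1), Real.sqrt_pos.2 (mul_pos hc0p hc1p), ?_⟩
  intro n hn
  have hnR : (1 : ℝ) ≤ n := by exact_mod_cast hn
  have hn0 : (0 : ℝ) < n := by linarith
  set ρ0 : ℝ := (n : ℝ) ^ (-(1 / ((k : ℝ) + 1))) with hρ0
  set s0 : ℝ := (n : ℝ) ^ (-((k : ℝ) / ((k + 1) * (m + 1)))) with hs0
  set Λ : ℝ := (n : ℝ) ^ ((2 : ℝ) - 2 / (k + 1) - k / ((k + 1) * (m + 1))) with hΛ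
  have hρp : 0 < ρ0 := Real.rpow_pos_of_pos hn0 _
  have hsp : 0 < s0 := Real.rpow_pos_of_pos hn0 _
  have hρ1 : ρ0 ≤ 1 := Real.rpow_le_one_of_one_le_of_nonpos hnR (by
    rw [neg_nonpos]; positivity)
  have hs1 : s0 ≤ 1 := Real.rpow_le_one_of_one_le_of_nonpos hnR (by
    rw [neg_nonpos]; positivity)
  have hk1 : (k : ℝ) + 1 ≠ 0 := by positivity
  have hm1' : (m : ℝ) + 1 ≠ 0 := by positivity
  have hΛe : Λ = n * n * (ρ0 ^ 2 * s0) := by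
    rw [hΛ, hρ0, hs0, ← Real.rpow_natCast, ← Real.rpow_mul hn0.le, ← Real.rpow_add hn0]
    nth_rewrite 2 [← Real.rpow_one (n : ℝ)]
    nth_rewrite 3 [← Real.rpow_one (n : ℝ)]
    rw [← Real.rpow_add hn0, ← Real.rpow_add hn0]
    congr 1
    push_cast
    ring
  have hρk : (ρ0 ^ k)⁻¹ = n * ρ0 := by
    have : n * ρ0 * ρ0 ^ k = 1 := by
      rw [hρ0, ← Real.rpow_natCast, ← Real.rpow_mul hn0.le]
      nth_rewrite 1 [← Real.rpow_one (n : ℝ)]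
      rw [← Real.rpow_add hn0, ← Real.rpow_add hn0]
      refine Eq.trans ?_ (Real.rpow_zero (n : ℝ))
      congr 1
      field_simp
      ring
    exact (eq_inv_of_mul_eq_one_left this).symm
  have hsm : (s0 ^ m)⁻¹ = n * ρ0 * s0 := by
    have : n * ρ0 * s0 * s0 ^ m = 1 := by
      rw [hρ0, hs0, ← Real.rpow_natCast, ← Real.rpow_mul hn0.le]
      nth_rewrite 1 [← Real.rpow_one (n : ℝ)]
      rw [← Real.rpow_add hn0, ← Real.rpow_add hn0, ← Real.rpow_add hn0]
      refine Eq.trans ?_ (Real.rpow_zero (n : ℝ))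
      congr 1
      field_simp
      ring
    exact (eq_inv_of_mul_eq_one_left this).symm
  have hnρ : 1 ≤ n * ρ0 := by
    rw [← hρk]
    exact (one_le_inv₀ (by positivity)).2 (pow_le_one₀ hρp.le hρ1)
  have hΛp : 0 < Λ := Real.rpow_pos_of_pos hn0 _
  obtain ⟨G, hG⟩ := LGaux.exists_lg_concrete H src tgt hne hcov hn (ρ0 / 2) (s0 / 2)
    (by positivity) (by linarith) (by positivity) (by linarith)
  refine ⟨G, hG.trans ?_⟩
  have b0 : (m : ℝ) * (n * n) * ((ρ0 / 2) ^ 2 * (s0 / 2)) ≤ m * Λ := by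
    have : (m : ℝ) * (n * n) * ((ρ0 / 2) ^ 2 * (s0 / 2)) = m * Λ / 8 := by rw [hΛe]; ring
    rw [this]
    have : 0 < m * Λ := by positivity
    linarith
  have b1 : ((ρ0 / 2) ^ k)⁻¹ * ((m : ℝ) * (2 * (n * ((ρ0 / 2) * (s0 / 2)) + s0 / 2))) ≤
      2 ^ k * (m * 2) * Λ := by
    have h1 : n * ((ρ0 / 2) * (s0 / 2)) + s0 / 2 ≤ n * ρ0 * s0 := by
      nlinarith
    rw [div_pow, inv_div, div_eq_mul_inv, hρk]
    calc 2 ^ k * (n * ρ0) * ((m : ℝ) * (2 * (n * ((ρ0 / 2) * (s0 / 2)) + s0 / 2)))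
        ≤ 2 ^ k * (n * ρ0) * ((m : ℝ) * (2 * (n * ρ0 * s0))) := by gcongr
      _ = _ := by rw [hΛe]; ring
  have b2 : ((ρ0 / 2) ^ k * (s0 / 2) ^ m)⁻¹ = 2 ^ (k + m) * Λ := by
    rw [mul_inv, div_pow, inv_div, div_eq_mul_inv, hρk, div_pow, inv_div, div_eq_mul_inv, hsm,
      hΛe]
    ring
  calc _ ≤ Real.sqrt ((c0 * Λ) * (c1 * Λ)) := by
        apply Real.sqrt_le_sqrt
        apply mul_le_mul
        · rw [hc0, mul_assoc _ (m : ℝ) Λ]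
          exact mul_le_mul_of_nonneg_left b0 (by positivity)
        · calc _ ≤ 4 ^ (k + m) * (m * Λ + (k * (2 ^ k * (m * 2) * Λ) +
                m * (2 ^ (k + m) * Λ))) := by
                rw [b2]
                gcongr
            _ = _ := by rw [hc1]; ring
        · positivity
        · positivity
    _ = Real.sqrt (c0 * c1) * Λ := by
        rw [show c0 * Λ * (c1 * Λ) = c0 * c1 * Λ ^ 2 by ring,
          Real.sqrt_mul (by positivity), Real.sqrt_sq hΛp.le]
end

section
/- Let H be a fixed simple graph on k ≥ 3 vertices with m edges and minimum degree d ≥ 1. There is a constant c > 0 depending only on H such that for every n ≥ 1 there exists a learning graph for the subgraph-detection function f_{H,n} whose complexity is at most c · n^{2 - 2/k - (2k-d-3)/(k(d+1)(m-d+2))}. -/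
namespace LGAux
open Finset

/-- Building a learning graph from an indexed family of arcs. -/
theorem exists_of_arcs {ι : Type} [Fintype ι] [DecidableEq ι] {f : (ι → Bool) → Bool}
    {V A : Type} [Fintype V] [DecidableEq V] [Fintype A] (root : V)
    (src tgt : A → V) (inj : Function.Injective fun a => (src a, tgt a))
    (rank : V → ℕ) (hrank : ∀ a, rank (src a) < rank (tgt a))
    (S : V → Finset ι) (S_root : S root = ∅) (S_mono : ∀ a, S (src a) ⊆ S (tgt a))
    (w : A → ℝ) (w_pos : ∀ a, 0 < w a) (p : (ι → Bool) → A → ℝ)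
    (hroot : ∀ y, f y = true →
      ((∑ a, if src a = root then p y a else 0) - ∑ a, if tgt a = root then p y a else 0) = 1)
    (hcons : ∀ y, f y = true → ∀ v : V, v ≠ root →
      ((∑ a, if tgt a = v then p y a else 0) - ∑ a, if src a = v then p y a else 0) = 0 ∨
      (0 < ((∑ a, if tgt a = v then p y a else 0) - ∑ a, if src a = v then p y a else 0) ∧
        ∀ z, (∀ i ∈ S v, z i = y i) → f z = true))
    (K0 K1 : ℝ) (hK1 : 0 ≤ K1)
    (h0 : ∑ a, ((S (tgt a) \ S (src a)).card : ℝ) * w a ≤ K0)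
    (h1 : ∀ y, f y = true →
      ∑ a, ((S (tgt a) \ S (src a)).card : ℝ) * (p y a) ^ 2 / w a ≤ K1) :
    ∃ G : LearningGraph (Set.univ : Set (ι → Bool)) f, G.complexity ≤ Real.sqrt (K0 * K1) := by
  classical
  have hsum : ∀ g : V × V → ℝ,
      ∑ e ∈ univ.image (fun a => (src a, tgt a)), g e = ∑ a, g (src a, tgt a) := by
    intro g
    rw [Finset.sum_image (fun a _ b _ h => inj h)]
  have hext : ∀ (g : A → ℝ) (a : A),
      Function.extend (fun a => (src a, tgt a)) g 0 (src a, tgt a) = g a := by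
    intro g a
    exact inj.extend_apply g 0 a
  refine ⟨{ V := V, root := root
            E := univ.image (fun a => (src a, tgt a))
            rank := rank
            acyclic := ?_
            S := S
            S_root := S_root
            S_mono := ?_
            w := Function.extend (fun a => (src a, tgt a)) w 0
            w_pos := ?_
            p := fun y => Function.extend (fun a => (src a, tgt a)) (p y) 0
            flow_root := ?_
            flow_cons := ?_ }, ?_⟩
  · intro e he
    obtain ⟨a, -, rfl⟩ := Finset.mem_image.1 he
    exact hrank a
  · intro e he
    obtain ⟨a, -, rfl⟩ := Finset.mem_image.1 he
    exact S_mono a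
  · intro e he
    obtain ⟨a, -, rfl⟩ := Finset.mem_image.1 he
    rw [hext]; exact w_pos a
  · intro y _ hy
    rw [hsum, hsum]
    simp only [hext]
    exact hroot y hy
  · intro y _ hy v hv
    rw [hsum, hsum]
    simp only [hext]
    rcases hcons y hy v hv with h | h
    · exact Or.inl h
    · exact Or.inr ⟨h.1, fun z _ hz => h.2 z hz⟩
  · unfold LearningGraph.complexity
    apply Real.sqrt_le_sqrt
    unfold LearningGraph.C0 LearningGraph.C1 LearningGraph.len
    have e0 := hsum (fun e => (((S e.2 \ S e.1).card : ℕ) : ℝ) *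
      Function.extend (fun a => (src a, tgt a)) w 0 e)
    simp only [hext] at e0
    have A0 : (0:ℝ) ≤ ∑ a, ((S (tgt a) \ S (src a)).card : ℝ) * w a :=
      Finset.sum_nonneg fun a _ => mul_nonneg (Nat.cast_nonneg _) (w_pos a).le
    refine mul_le_mul (e0.trans_le h0) ?_ ?_ (A0.trans h0)
    · apply Real.iSup_le _ hK1
      rintro ⟨y, _, hy⟩
      have e1 := hsum (fun e => (((S e.2 \ S e.1).card : ℕ) : ℝ) *
        (Function.extend (fun a => (src a, tgt a)) (p y) 0 e) ^ 2 /
        Function.extend (fun a => (src a, tgt a)) w 0 e)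
      simp only [hext] at e1
      exact e1.trans_le (h1 y hy)
    · apply Real.iSup_nonneg
      rintro ⟨y, _, hy⟩
      apply Finset.sum_nonneg
      intro e he
      obtain ⟨a, -, rfl⟩ := Finset.mem_image.1 he
      refine div_nonneg (mul_nonneg (Nat.cast_nonneg _) (sq_nonneg _)) ?_
      change 0 ≤ Function.extend (fun a => (src a, tgt a)) w 0 (src a, tgt a)
      rw [hext]
      exact (w_pos a).le

/-- Product Bernoulli measure on subsets. -/
noncomputable def mu {U : Type} [Fintype U] [DecidableEq U] (q : U → ℝ) (X : Finset U) : ℝ :=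
  ∏ x, if x ∈ X then q x else 1 - q x

section
variable {U : Type} [Fintype U] [DecidableEq U]

theorem mu_nonneg (q : U → ℝ) (h0 : ∀ x, 0 ≤ q x) (h1 : ∀ x, q x ≤ 1) (X : Finset U) :
    0 ≤ mu q X := by
  apply Finset.prod_nonneg
  intro x _
  have := h0 x
  have := h1 x
  split_ifs <;> linarith

theorem mu_pos (q : U → ℝ) (h0 : ∀ x, 0 < q x) (h1 : ∀ x, q x < 1) (X : Finset U) :
    0 < mu q X := by
  apply Finset.prod_pos
  intro x _
  have := h0 x
  have := h1 x
  split_ifs <;> linarith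

theorem sum_mu_sub (q : U → ℝ) (Z : Finset U) :
    ∑ X : Finset U, mu q X * (if Z ⊆ X then 1 else 0) = ∏ z ∈ Z, q z := by
  have h := Finset.prod_add (fun x => q x) (fun x => if x ∈ Z then 0 else 1 - q x)
    (univ : Finset U)
  have hL : ∏ x, (q x + if x ∈ Z then 0 else 1 - q x) = ∏ z ∈ Z, q z := by
    rw [← Finset.prod_subset (Finset.subset_univ Z)]
    · apply Finset.prod_congr rfl
      intro x hx
      simp [hx]
    · intro x _ hx
      simp [hx]
  rw [← hL, h, Finset.powerset_univ]
  apply Finset.sum_congr rfl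
  intro X _
  have : ∀ g : U → ℝ, (∏ i ∈ X, q i) * ∏ i ∈ univ \ X, g i
      = ∏ x, if x ∈ X then q x else g x := by
    intro g
    rw [Finset.prod_ite]
    congr 1
    · apply Finset.prod_congr _ (fun _ _ => rfl)
      ext; simp
    · apply Finset.prod_congr _ (fun _ _ => rfl)
      ext; simp
  rw [this]
  by_cases hZ : Z ⊆ X
  · rw [if_pos hZ, mul_one]
    apply Finset.prod_congr rfl
    intro x _
    by_cases hx : x ∈ X
    · simp [hx]
    · have hxZ : x ∉ Z := fun h => hx (hZ h)
      simp [hx, hxZ]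
  · rw [if_neg hZ, mul_zero]
    obtain ⟨x, hx, hx'⟩ := Finset.not_subset.1 hZ
    symm
    apply Finset.prod_eq_zero (Finset.mem_univ x)
    simp [hx, hx']

theorem sum_mu (q : U → ℝ) : ∑ X : Finset U, mu q X = 1 := by
  have := sum_mu_sub q ∅
  simpa using this

variable {T : ℕ}

/-- The densities after fixing the marked elements of classes `< t` to be present and the other
marked elements to be absent. -/
noncomputable def qm (cls : U → Fin T) (q : Fin T → ℝ) (u : Fin T → U) (t : ℕ) (x : U) : ℝ :=
  if u (cls x) = x then (if (cls x : ℕ) < t then 1 else 0) else q (cls x)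

theorem qm_nonneg (cls : U → Fin T) (q : Fin T → ℝ) (hq : ∀ t, 0 < q t) (u : Fin T → U) (t : ℕ)
    (x : U) : 0 ≤ qm cls q u t x := by
  unfold qm
  have := hq (cls x)
  split_ifs <;> linarith

theorem qm_le_one (cls : U → Fin T) (q : Fin T → ℝ) (hq : ∀ t, q t ≤ 1 / 2) (u : Fin T → U) (t : ℕ)
    (x : U) : qm cls q u t x ≤ 1 := by
  unfold qm
  have := hq (cls x)
  split_ifs <;> linarith

theorem mu_qm_zero_of_mem (cls : U → Fin T) (q : Fin T → ℝ) (u : Fin T → U)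
    (hu : ∀ t, cls (u t) = t) (t : Fin T) (X : Finset U) (h : u t ∈ X) :
    mu (qm cls q u t) X = 0 := by
  apply Finset.prod_eq_zero (Finset.mem_univ (u t))
  simp [h, qm, hu]

theorem mu_qm_zero_of_not_mem (cls : U → Fin T) (q : Fin T → ℝ) (u : Fin T → U)
    (hu : ∀ t, cls (u t) = t) (t : Fin T) (m : ℕ) (hm : (t : ℕ) < m) (X : Finset U) (h : u t ∉ X) :
    mu (qm cls q u m) X = 0 := by
  apply Finset.prod_eq_zero (Finset.mem_univ (u t))
  simp [h, qm, hu, hm]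

theorem mu_qm_insert (cls : U → Fin T) (q : Fin T → ℝ) (u : Fin T → U)
    (hu : ∀ t, cls (u t) = t) (t : Fin T) (X : Finset U) (h : u t ∉ X) :
    mu (qm cls q u (t + 1)) (insert (u t) X) = mu (qm cls q u t) X := by
  apply Finset.prod_congr rfl
  intro x _
  by_cases hx : x = u t
  · subst hx
    simp [qm, hu, h]
  · have : qm cls q u (t + 1) x = qm cls q u t x := by
      unfold qm
      by_cases h2 : u (cls x) = x
      · have h3 : (cls x : ℕ) ≠ t := by
          intro h4
          apply hx
          rw [← h2, Fin.ext h4]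
        have h4 : ((cls x : ℕ) < t + 1) ↔ ((cls x : ℕ) < t) := by omega
        simp only [h4]
      · simp [h2]
    rw [this]
    simp [hx]

theorem mu_qm_le (cls : U → Fin T) (q : Fin T → ℝ) (hq0 : ∀ t, 0 < q t) (hq : ∀ t, q t ≤ 1 / 2)
    (u : Fin T → U) (hu : ∀ t, cls (u t) = t) (t : ℕ) (X : Finset U) :
    mu (qm cls q u t) X * ((1 / 2) ^ T * ∏ s : Fin T, if (s : ℕ) < t then q s else 1) ≤
      mu (fun x => q (cls x)) X := by
  have key : (1 / 2 : ℝ) ^ T * (∏ s : Fin T, if (s : ℕ) < t then q s else 1) =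
      ∏ x : U, if u (cls x) = x then (1 / 2) * (if (cls x : ℕ) < t then q (cls x) else 1)
        else 1 := by
    have hinj : Function.Injective u := fun a b hab => by rw [← hu a, ← hu b, hab]
    have e1 : (1 / 2 : ℝ) ^ T * (∏ s : Fin T, if (s : ℕ) < t then q s else 1) =
        ∏ s : Fin T, (1 / 2) * (if (s : ℕ) < t then q s else 1) := by
      rw [Finset.prod_mul_distrib]; simp
    rw [e1, ← Finset.prod_subset (Finset.subset_univ (univ.image u)),
      Finset.prod_image (fun a _ b _ h => hinj h)]
    · simp [hu]
    · intro x _ hx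
      rw [if_neg]
      intro h
      exact hx (Finset.mem_image.2 ⟨_, Finset.mem_univ _, h⟩)
  rw [key]
  unfold mu
  rw [← Finset.prod_mul_distrib]
  apply Finset.prod_le_prod
  · intro x _
    have := qm_nonneg cls q hq0 u t x
    have := qm_le_one cls q hq u t x
    have := hq0 (cls x)
    apply mul_nonneg
    · split_ifs <;> linarith
    · split_ifs <;> linarith
  · intro x _
    have := hq0 (cls x)
    have := hq (cls x)
    unfold qm
    split_ifs <;> linarith

end

set_option linter.unusedSectionVars false

section
variable {U : Type} [Fintype U] [DecidableEq U] {T : ℕ}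

/-- Arcs of the staged learning graph. -/
abbrev Arc (U : Type) := Finset U ⊕ {p : Finset U × U // p.2 ∉ p.1}

/-- Source of an arc. -/
def asrc (cls : U → Fin T) : Arc U → Option (Fin (T + 1) × Finset U)
  | .inl _ => none
  | .inr p => some ((cls p.1.2).castSucc, p.1.1)

/-- Target of an arc. -/
def atgt (cls : U → Fin T) : Arc U → Option (Fin (T + 1) × Finset U)
  | .inl X => some (0, X)
  | .inr p => some ((cls p.1.2).succ, insert p.1.2 p.1.1)

/-- Flow on an arc. -/
noncomputable def aflow (cls : U → Fin T) (q : Fin T → ℝ) (u : Fin T → U) : Arc U → ℝ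
  | .inl X => mu (qm cls q u 0) X
  | .inr p => if p.1.2 = u (cls p.1.2) then mu (qm cls q u (cls p.1.2)) p.1.1 else 0

/-- Weight of an arc. -/
noncomputable def aweight (cls : U → Fin T) (q : Fin T → ℝ) (l0 : ℝ) (l : Fin T → ℝ) : Arc U → ℝ
  | .inl X => l0 * mu (fun x => q (cls x)) X
  | .inr p => l (cls p.1.2) * mu (fun x => q (cls x)) p.1.1

theorem arc_inj (cls : U → Fin T) :
    Function.Injective fun a : Arc U => (asrc cls a, atgt cls a) := by
  rintro (X | ⟨⟨X, u⟩, hu⟩) (Y | ⟨⟨Y, v⟩, hv⟩) h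
  · simpa [asrc, atgt] using h
  · simp [asrc] at h
  · simp [asrc] at h
  · simp only [asrc, atgt, Prod.mk.injEq, Option.some.injEq] at h
    obtain ⟨⟨_, h2⟩, _, h4⟩ := h
    subst h2
    have : u = v := (Finset.insert_inj hu).1 h4
    subst this
    rfl

theorem inflow (cls : U → Fin T) (q : Fin T → ℝ) (u : Fin T → U)
    (hu : ∀ t, cls (u t) = t) (t : Fin (T + 1)) (X : Finset U) :
    (∑ a : Arc U, if atgt cls a = some (t, X) then aflow cls q u a else 0) =
      mu (qm cls q u t) X := by
  rw [Fintype.sum_sum_type]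
  refine Fin.cases ?_ (fun s => ?_) t
  · have e2 : (∑ p : {p : Finset U × U // p.2 ∉ p.1},
        if atgt cls (Sum.inr p) = some ((0 : Fin (T + 1)), X) then aflow cls q u (Sum.inr p)
          else 0) = 0 := by
      apply Finset.sum_eq_zero
      intro p _
      rw [if_neg]
      simp only [atgt, Option.some.injEq, Prod.mk.injEq, not_and]
      intro h
      exact absurd h (Fin.succ_ne_zero _)
    rw [e2, add_zero, Finset.sum_eq_single X]
    · simp [atgt, aflow]
    · intro Y _ hY
      simp [atgt, hY]
    · simp
  · have e1 : (∑ Y : Finset U,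
        if atgt cls (Sum.inl Y) = some (s.succ, X) then aflow cls q u (Sum.inl Y)
          else 0) = 0 := by
      apply Finset.sum_eq_zero
      intro p _
      rw [if_neg]
      simp only [atgt, Option.some.injEq, Prod.mk.injEq, not_and]
      intro h
      exact absurd h.symm (Fin.succ_ne_zero _)
    rw [e1, zero_add]
    have haux : ∀ p : {p : Finset U × U // p.2 ∉ p.1},
        atgt cls (Sum.inr p) = some (s.succ, X) → p.1.2 = u (cls p.1.2) →
        p.1 = (X.erase (u s), u s) ∧ u s ∈ X := by
      rintro ⟨⟨Y, v⟩, hv⟩ h1 h2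
      simp only [atgt, Option.some.injEq, Prod.mk.injEq, Fin.succ_inj] at h1 h2 hv ⊢
      obtain ⟨h3, h4⟩ := h1
      rw [h3] at h2
      subst h2
      subst h4
      simp [Finset.erase_insert hv]
    by_cases hX : u s ∈ X
    · rw [Fintype.sum_eq_single ⟨(X.erase (u s), u s), Finset.notMem_erase _ _⟩]
      · simp only [atgt, aflow, hu, Finset.insert_erase hX, if_true]
        have := mu_qm_insert cls q u hu s (X.erase (u s)) (Finset.notMem_erase _ _)
        rw [Finset.insert_erase hX] at this
        simpa using this.symm
      · intro p hp
        by_cases h1 : atgt cls (Sum.inr p) = some (s.succ, X)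
        · rw [if_pos h1]
          by_cases h2 : p.1.2 = u (cls p.1.2)
          · exact absurd (Subtype.ext (haux p h1 h2).1) hp
          · simp only [aflow, if_neg h2]
        · rw [if_neg h1]
    · rw [mu_qm_zero_of_not_mem cls q u hu s _ (by simp) X hX]
      apply Finset.sum_eq_zero
      intro p _
      by_cases h1 : atgt cls (Sum.inr p) = some (s.succ, X)
      · rw [if_pos h1]
        by_cases h2 : p.1.2 = u (cls p.1.2)
        · exact absurd (haux p h1 h2).2 hX
        · simp only [aflow, if_neg h2]
      · rw [if_neg h1]

theorem outflow (cls : U → Fin T) (q : Fin T → ℝ) (u : Fin T → U)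
    (hu : ∀ t, cls (u t) = t) (t : Fin (T + 1)) (X : Finset U) :
    (∑ a : Arc U, if asrc cls a = some (t, X) then aflow cls q u a else 0) =
      if (t : ℕ) < T then mu (qm cls q u t) X else 0 := by
  rw [Fintype.sum_sum_type]
  have e1 : (∑ Y : Finset U,
      if asrc cls (Sum.inl Y) = some (t, X) then aflow cls q u (Sum.inl Y) else 0) = 0 := by
    apply Finset.sum_eq_zero
    intro p _
    rw [if_neg]
    simp [asrc]
  rw [e1, zero_add]
  clear e1
  refine Fin.lastCases ?_ (fun s => ?_) t
  · simp only [Fin.val_last, lt_self_iff_false, if_false]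
    apply Finset.sum_eq_zero
    intro p _
    rw [if_neg]
    simp only [asrc, Option.some.injEq, Prod.mk.injEq, not_and]
    intro h
    exact absurd h (Fin.castSucc_lt_last _).ne
  · simp only [Fin.val_castSucc, Fin.is_lt, if_true]
    have haux : ∀ p : {p : Finset U × U // p.2 ∉ p.1},
        asrc cls (Sum.inr p) = some (s.castSucc, X) → p.1.2 = u (cls p.1.2) →
        p.1 = (X, u s) ∧ u s ∉ X := by
      rintro ⟨⟨Y, v⟩, hv⟩ h1 h2
      simp only [asrc, Option.some.injEq, Prod.mk.injEq, Fin.castSucc_inj] at h1 h2 hv ⊢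
      obtain ⟨h3, h4⟩ := h1
      rw [h3] at h2
      subst h2
      subst h4
      simp [hv]
    by_cases hX : u s ∈ X
    · rw [mu_qm_zero_of_mem cls q u hu s X hX]
      apply Finset.sum_eq_zero
      intro p _
      by_cases h1 : asrc cls (Sum.inr p) = some (s.castSucc, X)
      · rw [if_pos h1]
        by_cases h2 : p.1.2 = u (cls p.1.2)
        · exact absurd hX (haux p h1 h2).2
        · simp only [aflow, if_neg h2]
      · rw [if_neg h1]
    · rw [Fintype.sum_eq_single ⟨(X, u s), hX⟩]
      · simp [asrc, aflow, hu]
      · intro p hp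
        by_cases h1 : asrc cls (Sum.inr p) = some (s.castSucc, X)
        · rw [if_pos h1]
          by_cases h2 : p.1.2 = u (cls p.1.2)
          · exact absurd (Subtype.ext (haux p h1 h2).1) hp
          · simp only [aflow, if_neg h2]
        · rw [if_neg h1]

theorem sum_arc_le (g : Finset U → U → ℝ) (hg : ∀ X u, 0 ≤ g X u) :
    ∑ p : {p : Finset U × U // p.2 ∉ p.1}, g p.1.1 p.1.2 ≤ ∑ X : Finset U, ∑ u : U, g X u := by
  rw [← Fintype.sum_prod_type' (f := g)]
  rw [← Finset.sum_subtype (univ.filter fun p : Finset U × U => p.2 ∉ p.1) (by simp)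
    (fun p => g p.1 p.2)]
  exact Finset.sum_le_sum_of_subset_of_nonneg (Finset.filter_subset _ _) (fun p _ _ => hg _ _)

theorem exists_staged {ι : Type} [Fintype ι] [DecidableEq ι] {f : (ι → Bool) → Bool}
    (cls : U → Fin T) (q : Fin T → ℝ) (hq0 : ∀ t, 0 < q t) (hq : ∀ t, q t ≤ 1 / 2)
    (S : Finset U → Finset ι) (S_mono : ∀ X Y, X ⊆ Y → S X ⊆ S Y)
    (mk : (ι → Bool) → Fin T → U)
    (hmk : ∀ y, f y = true → ∀ t, cls (mk y t) = t)
    (cert : ∀ y, f y = true → ∀ X, (∀ t, mk y t ∈ X) → ∀ z, (∀ i ∈ S X, z i = y i) → f z = true)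
    (B : ℝ) (hB : 0 < B) (α0 β0 : ℝ) (α β : Fin T → ℝ) (hαzp : 0 < α0) (hαp : ∀ t, 0 < α t)
    (hα0 : ∑ X, mu (fun x => q (cls x)) X * ((S X).card : ℝ) ≤ α0)
    (hα : ∀ t, ∑ X, mu (fun x => q (cls x)) X *
      ∑ u ∈ univ.filter (fun u => cls u = t), ((S (insert u X) \ S X).card : ℝ) ≤ α t)
    (hβ0 : ∀ y, f y = true → ∑ X, mu (qm cls q (mk y) 0) X * ((S X).card : ℝ) ≤ β0)
    (hβ : ∀ y, f y = true → ∀ t, ∑ X, mu (qm cls q (mk y) (t : Fin T)) X *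
      ((S (insert (mk y t) X) \ S X).card : ℝ) ≤ β t)
    (h0 : α0 * β0 ≤ B ^ 2)
    (h : ∀ t : Fin T, α t * β t ≤ B ^ 2 * ∏ s : Fin T, if (s : ℕ) < t then q s else 1) :
    ∃ G : LearningGraph (Set.univ : Set (ι → Bool)) f,
      G.complexity ≤ (T + 1) * 2 ^ T * B := by
  set Q : U → ℝ := fun x => q (cls x) with hQ
  have hQpos : ∀ X, 0 < mu Q X :=
    mu_pos Q (fun x => hq0 _) (fun x => lt_of_le_of_lt (hq _) (by norm_num))
  set P : ℕ → ℝ := fun t => ∏ s : Fin T, if (s : ℕ) < t then q s else 1 with hP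
  have hPpos : ∀ t, 0 < P t := fun t => Finset.prod_pos fun s _ => by
    have := hq0 s
    split_ifs <;> linarith
  have hP0 : P 0 = 1 := by simp [hP]
  let SV : Option (Fin (T + 1) × Finset U) → Finset ι := fun v => v.elim ∅ fun p => S p.2
  -- a uniform estimate of the energy
  have energy : ∀ (y : ι → Bool) (t : ℕ) (X : Finset U) (c l : ℝ), f y = true → 0 ≤ c → 0 < l →
      c * mu (qm cls q (mk y) t) X ^ 2 / (l * mu Q X) ≤
        (2 ^ T / (l * P t)) * (mu (qm cls q (mk y) t) X * c) := by
    intro y t X c l hy hc hl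
    have h1 := mu_qm_le cls q hq0 hq (mk y) (hmk y hy) t X
    have h2 : 0 ≤ mu (qm cls q (mk y) t) X :=
      mu_nonneg _ (qm_nonneg cls q hq0 _ _) (qm_le_one cls q hq _ _) X
    change _ * (_ * P t) ≤ mu Q X at h1
    generalize mu (qm cls q (mk y) t) X = ν at *
    have h3 := hQpos X
    have h4 := hPpos t
    have h5 : ν * P t ≤ 2 ^ T * mu Q X := by
      have : ν * P t = 2 ^ T * (ν * ((1 / 2) ^ T * P t)) := by
        rw [one_div, inv_pow]; field_simp
      rw [this]
      exact mul_le_mul_of_nonneg_left h1 (by positivity)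
    rw [div_mul_eq_mul_div, div_le_div_iff₀ (by positivity) (by positivity)]
    calc c * ν ^ 2 * (l * P t) = (c * ν * l) * (ν * P t) := by ring
      _ ≤ (c * ν * l) * (2 ^ T * mu Q X) := mul_le_mul_of_nonneg_left h5 (by positivity)
      _ = _ := by ring
  have main := exists_of_arcs (f := f) (none : Option (Fin (T + 1) × Finset U))
    (asrc cls) (atgt cls) (arc_inj cls) (fun v => v.elim 0 fun p => (p.1 : ℕ) + 1) ?_
    SV rfl ?_ (aweight cls q (B / α0) (fun t => B / α t)) ?_ (fun y => aflow cls q (mk y))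
    ?_ ?_ ((T + 1) * B) ((T + 1) * 2 ^ T * B) (by positivity) ?_ ?_
  · obtain ⟨G, hG⟩ := main
    refine ⟨G, hG.trans ?_⟩
    apply Real.sqrt_le_iff.2
    refine ⟨by positivity, ?_⟩
    have h1 : (1 : ℝ) ≤ 2 ^ T := one_le_pow₀ (by norm_num)
    have h2 : (0 : ℝ) ≤ ((T + 1) * B) ^ 2 * 2 ^ T := by positivity
    nlinarith
  · rintro (X | p)
    · simp [asrc, atgt]
    · simp [asrc, atgt]
  · rintro (X | p)
    · simp [asrc, atgt, SV]
    · exact S_mono _ _ (Finset.subset_insert _ _)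
  · rintro (X | p)
    · exact mul_pos (div_pos hB hαzp) (hQpos _)
    · exact mul_pos (div_pos hB (hαp _)) (hQpos _)
  · intro y hy
    rw [Fintype.sum_sum_type, Fintype.sum_sum_type]
    simp only [asrc, atgt, reduceCtorEq, if_true, if_false, Finset.sum_const_zero, add_zero,
      sub_zero, aflow]
    exact sum_mu _
  · intro y hy v hv
    obtain ⟨t, X⟩ | _ := v
    · exact absurd rfl hv
    rename_i tX
    obtain ⟨t, X⟩ := tX
    rw [inflow cls q (mk y) (hmk y hy), outflow cls q (mk y) (hmk y hy)]
    by_cases ht : (t : ℕ) < T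
    · left
      rw [if_pos ht, sub_self]
    · rw [if_neg ht, sub_zero]
      have h2 : 0 ≤ mu (qm cls q (mk y) t) X :=
        mu_nonneg _ (qm_nonneg cls q hq0 _ _) (qm_le_one cls q hq _ _) X
      rcases h2.eq_or_lt with h3 | h3
      · exact Or.inl h3.symm
      · refine Or.inr ⟨h3, fun z hz => cert y hy X ?_ z hz⟩
        intro s
        by_contra hs
        exact h3.ne' (mu_qm_zero_of_not_mem cls q (mk y) (hmk y hy) s _
          (lt_of_lt_of_le s.2 (not_lt.1 ht)) X hs)
  · rw [Fintype.sum_sum_type]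
    have e1 : ∑ X : Finset U, ((SV (atgt cls (Sum.inl X)) \ SV (asrc cls (Sum.inl X))).card : ℝ) *
        aweight cls q (B / α0) (fun t => B / α t) (Sum.inl X) ≤ B := by
      have : ∀ X : Finset U, ((SV (atgt cls (Sum.inl X)) \ SV (asrc cls (Sum.inl X))).card : ℝ) *
        aweight cls q (B / α0) (fun t => B / α t) (Sum.inl X) =
          B / α0 * (mu Q X * ((S X).card : ℝ)) := by
        intro X
        simp only [asrc, atgt, SV, aweight, Option.elim, Finset.sdiff_empty]
        ring
      simp only [this]
      rw [← Finset.mul_sum, div_mul_eq_mul_div, div_le_iff₀ hαzp]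
      exact mul_le_mul_of_nonneg_left hα0 hB.le
    have e2 : ∑ p : {p : Finset U × U // p.2 ∉ p.1},
        ((SV (atgt cls (Sum.inr p)) \ SV (asrc cls (Sum.inr p))).card : ℝ) *
        aweight cls q (B / α0) (fun t => B / α t) (Sum.inr p) ≤ T * B := by
      refine (sum_arc_le (fun X u => ((S (insert u X) \ S X).card : ℝ) *
        (B / α (cls u) * mu Q X)) ?_).trans ?_
      · intro X u
        exact mul_nonneg (Nat.cast_nonneg _)
          (mul_nonneg (div_pos hB (hαp _)).le (hQpos X).le)
      · have : ∑ X : Finset U, ∑ u : U, ((S (insert u X) \ S X).card : ℝ) *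
            (B / α (cls u) * mu Q X) = ∑ t : Fin T, B / α t * ∑ X, mu Q X *
              ∑ u ∈ univ.filter (fun u => cls u = t), ((S (insert u X) \ S X).card : ℝ) := by
          simp only [Finset.mul_sum]
          rw [Finset.sum_comm (s := (univ : Finset (Fin T)))]
          apply Finset.sum_congr rfl
          intro X _
          rw [← Finset.sum_fiberwise (s := univ) (g := cls)]
          apply Finset.sum_congr rfl
          intro t _
          apply Finset.sum_congr rfl
          intro u hu
          rw [(Finset.mem_filter.1 hu).2]
          ring
        rw [this]
        calc _ ≤ ∑ t : Fin T, B := by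
              apply Finset.sum_le_sum
              intro t _
              rw [div_mul_eq_mul_div, div_le_iff₀ (hαp t)]
              exact mul_le_mul_of_nonneg_left (hα t) hB.le
          _ = T * B := by simp
    linarith
  · intro y hy
    rw [Fintype.sum_sum_type]
    have e1 : ∑ X : Finset U, ((SV (atgt cls (Sum.inl X)) \ SV (asrc cls (Sum.inl X))).card : ℝ) *
        aflow cls q (mk y) (Sum.inl X) ^ 2 /
        aweight cls q (B / α0) (fun t => B / α t) (Sum.inl X) ≤ 2 ^ T * B := by
      calc _ ≤ ∑ X, (2 ^ T / (B / α0 * P 0)) *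
            (mu (qm cls q (mk y) 0) X * ((S X).card : ℝ)) := by
            apply Finset.sum_le_sum
            intro X _
            simp only [asrc, atgt, SV, aweight, aflow, Option.elim, Finset.sdiff_empty]
            exact energy y 0 X _ _ hy (Nat.cast_nonneg _) (div_pos hB hαzp)
        _ ≤ (2 ^ T / (B / α0 * P 0)) * β0 := by
            rw [← Finset.mul_sum]
            exact mul_le_mul_of_nonneg_left (hβ0 y hy)
              (div_pos (by positivity) (mul_pos (div_pos hB hαzp) (hPpos 0))).le
        _ = 2 ^ T * (α0 * β0 / B) := by
            rw [hP0]; field_simp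
        _ ≤ 2 ^ T * B := by
            apply mul_le_mul_of_nonneg_left _ (by positivity)
            rw [div_le_iff₀ hB]
            linarith
    have e2 : ∑ p : {p : Finset U × U // p.2 ∉ p.1},
        ((SV (atgt cls (Sum.inr p)) \ SV (asrc cls (Sum.inr p))).card : ℝ) *
        aflow cls q (mk y) (Sum.inr p) ^ 2 /
        aweight cls q (B / α0) (fun t => B / α t) (Sum.inr p) ≤ T * (2 ^ T * B) := by
      refine (sum_arc_le (fun X u => ((S (insert u X) \ S X).card : ℝ) *
        (if u = mk y (cls u) then mu (qm cls q (mk y) (cls u)) X else 0) ^ 2 /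
        (B / α (cls u) * mu Q X)) ?_).trans ?_
      · intro X u
        exact div_nonneg (mul_nonneg (Nat.cast_nonneg _) (sq_nonneg _))
          (mul_nonneg (div_pos hB (hαp _)).le (hQpos X).le)
      · have : ∀ X : Finset U, ∑ u : U, ((S (insert u X) \ S X).card : ℝ) *
            (if u = mk y (cls u) then mu (qm cls q (mk y) (cls u)) X else 0) ^ 2 /
            (B / α (cls u) * mu Q X) = ∑ t : Fin T, ((S (insert (mk y t) X) \ S X).card : ℝ) *
            mu (qm cls q (mk y) t) X ^ 2 / (B / α t * mu Q X) := by
          intro X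
          have hinj : Function.Injective (mk y) :=
            fun a b hab => by rw [← hmk y hy a, ← hmk y hy b, hab]
          rw [← Finset.sum_subset (Finset.subset_univ (univ.image (mk y))),
            Finset.sum_image (fun a _ b _ h => hinj h)]
          · simp [hmk y hy]
          · intro x _ hx
            rw [if_neg]
            · simp
            · intro h
              exact hx (Finset.mem_image.2 ⟨_, Finset.mem_univ _, h.symm⟩)
        simp only [this]
        rw [Finset.sum_comm]
        calc _ ≤ ∑ t : Fin T, 2 ^ T * B := by
              apply Finset.sum_le_sum
              intro t _
              have hPt := hPpos t
              have hαt := hαp t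
              calc _ ≤ ∑ X, (2 ^ T / (B / α t * P t)) *
                    (mu (qm cls q (mk y) t) X * ((S (insert (mk y t) X) \ S X).card : ℝ)) := by
                    apply Finset.sum_le_sum
                    intro X _
                    exact energy y t X _ _ hy (Nat.cast_nonneg _) (div_pos hB (hαp t))
                _ ≤ (2 ^ T / (B / α t * P t)) * β t := by
                    rw [← Finset.mul_sum]
                    exact mul_le_mul_of_nonneg_left (hβ y hy t)
                      (div_pos (by positivity) (mul_pos (div_pos hB (hαp t)) (hPpos t))).le
                _ = 2 ^ T * (α t * β t / (B * P t)) := by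
                    field_simp
                _ ≤ 2 ^ T * B := by
                    apply mul_le_mul_of_nonneg_left _ (by positivity)
                    rw [div_le_iff₀ (mul_pos hB hPt)]
                    have := h t
                    change _ ≤ B ^ 2 * P t at this
                    linarith
          _ = T * (2 ^ T * B) := by simp
    linarith

end

section
variable {U Γ ι : Type} [Fintype U] [DecidableEq U] [Fintype Γ] [DecidableEq Γ]
  [Fintype ι] [DecidableEq ι]

/-- The label generated by gadgets: `slot g` is loaded once all of `need g` is present. -/
def lab (need : Γ → Finset U) (slot : Γ → Finset ι) (X : Finset U) : Finset ι :=
  (univ.filter fun g => need g ⊆ X).biUnion slot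

theorem lab_mono (need : Γ → Finset U) (slot : Γ → Finset ι) (X Y : Finset U) (h : X ⊆ Y) :
    lab need slot X ⊆ lab need slot Y := by
  apply Finset.biUnion_subset_biUnion_of_subset_left
  intro g hg
  simp only [Finset.mem_filter, Finset.mem_univ, true_and] at hg ⊢
  exact hg.trans h

theorem card_biUnion_le_one (slot : Γ → Finset ι) (hslot : ∀ g, (slot g).card ≤ 1)
    (G : Finset Γ) : (G.biUnion slot).card ≤ G.card := by
  refine Finset.card_biUnion_le.trans ?_
  calc _ ≤ ∑ g ∈ G, 1 := Finset.sum_le_sum fun g _ => hslot g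
    _ = _ := by simp

theorem sum_lab_le (need : Γ → Finset U) (slot : Γ → Finset ι) (hslot : ∀ g, (slot g).card ≤ 1)
    (Q : U → ℝ) (h0 : ∀ x, 0 ≤ Q x) (h1 : ∀ x, Q x ≤ 1) :
    ∑ X, mu Q X * ((lab need slot X).card : ℝ) ≤ ∑ g, ∏ z ∈ need g, Q z := by
  calc _ ≤ ∑ X, mu Q X * ∑ g, (if need g ⊆ X then (1 : ℝ) else 0) := by
        apply Finset.sum_le_sum
        intro X _
        apply mul_le_mul_of_nonneg_left _ (mu_nonneg Q h0 h1 X)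
        rw [Finset.sum_boole]
        exact_mod_cast card_biUnion_le_one slot hslot _
    _ = _ := by
        simp only [Finset.mul_sum]
        rw [Finset.sum_comm]
        simp only [sum_mu_sub]

theorem sum_lab_diff_le (need : Γ → Finset U) (slot : Γ → Finset ι)
    (hslot : ∀ g, (slot g).card ≤ 1)
    (Q : U → ℝ) (h0 : ∀ x, 0 ≤ Q x) (h1 : ∀ x, Q x ≤ 1) (u : U) :
    ∑ X, mu Q X * ((lab need slot (insert u X) \ lab need slot X).card : ℝ) ≤
      ∑ g, if u ∈ need g then ∏ z ∈ (need g).erase u, Q z else 0 := by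
  calc _ ≤ ∑ X, mu Q X * ∑ g ∈ univ.filter (fun g => u ∈ need g),
          (if (need g).erase u ⊆ X then (1 : ℝ) else 0) := by
        apply Finset.sum_le_sum
        intro X _
        apply mul_le_mul_of_nonneg_left _ (mu_nonneg Q h0 h1 X)
        rw [Finset.sum_boole]
        refine le_trans ?_ (Nat.cast_le.2 (card_biUnion_le_one slot hslot _))
        apply Nat.cast_le.2
        apply Finset.card_le_card
        intro i hi
        simp only [lab, Finset.mem_sdiff, Finset.mem_biUnion, Finset.mem_filter,
          Finset.mem_univ, true_and, not_exists, not_and] at hi ⊢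
        obtain ⟨⟨g, hg, hi1⟩, hi2⟩ := hi
        refine ⟨g, ⟨?_, Finset.subset_insert_iff.1 hg⟩, hi1⟩
        by_contra hu
        exact hi2 g ((Finset.subset_insert_iff_of_notMem hu).1 hg) hi1
    _ = _ := by
        simp only [Finset.mul_sum]
        rw [Finset.sum_comm]
        simp only [sum_mu_sub]
        rw [Finset.sum_filter]

end

section
variable {k n : ℕ} {Ed : Type} [Fintype Ed] [DecidableEq Ed]

/-- The universe of elements that may be inserted in a configuration. -/
abbrev Univ (k n : ℕ) (Ed : Type) := (Fin k × Fin n) ⊕ (Ed × Fin n × Fin n)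

/-- The class of an element. -/
def kl : Univ k n Ed → Fin k ⊕ Ed
  | .inl p => .inl p.1
  | .inr g => .inr g.1

/-- Requirements of a gadget. -/
def need (es ed : Ed → Fin k) (g : Ed × Fin n × Fin n) : Finset (Univ k n Ed) :=
  {Sum.inl (es g.1, g.2.1), Sum.inl (ed g.1, g.2.2), Sum.inr g}

/-- The slot loaded by a gadget. -/
def slot (g : Ed × Fin n × Fin n) : Finset (EdgeSlot n) :=
  univ.filter fun q => (q.1.1 = g.2.1 ∧ q.1.2 = g.2.2) ∨ (q.1.1 = g.2.2 ∧ q.1.2 = g.2.1)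

theorem slot_card (g : Ed × Fin n × Fin n) : (slot g).card ≤ 1 := by
  rw [Finset.card_le_one]
  rintro ⟨⟨a, b⟩, hab⟩ h1 ⟨⟨c, d⟩, hcd⟩ h2
  simp only [slot, Finset.mem_filter, Finset.mem_univ, true_and] at h1 h2
  simp only [Subtype.mk.injEq, Prod.mk.injEq]
  simp only at hab hcd
  rcases h1 with ⟨rfl, rfl⟩ | ⟨rfl, rfl⟩ <;> rcases h2 with ⟨rfl, rfl⟩ | ⟨rfl, rfl⟩
  · simp
  · exact absurd hab (not_lt.2 hcd.le)
  · exact absurd hab (not_lt.2 hcd.le)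
  · simp

theorem prod_need (es ed : Ed → Fin k) (hne : ∀ e, es e ≠ ed e) (Q : Univ k n Ed → ℝ)
    (g : Ed × Fin n × Fin n) :
    ∏ z ∈ need es ed g, Q z =
      Q (Sum.inl (es g.1, g.2.1)) * (Q (Sum.inl (ed g.1, g.2.2)) * Q (Sum.inr g)) := by
  unfold need
  rw [Finset.prod_insert (by simp [hne]), Finset.prod_insert (by simp), Finset.prod_singleton]

theorem sum_vertex_le (es ed : Ed → Fin k) (hne : ∀ e, es e ≠ ed e) (Q : Univ k n Ed → ℝ)
    (h0 : ∀ x, 0 ≤ Q x) (i : Fin k) (a : Fin n) :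
    (∑ g, if (Sum.inl (i, a) : Univ k n Ed) ∈ need es ed g then
      ∏ z ∈ (need es ed g).erase (Sum.inl (i, a)), Q z else 0) ≤
    ∑ e, ((if es e = i then ∑ b, Q (Sum.inl (ed e, b)) * Q (Sum.inr (e, a, b)) else 0) +
      (if ed e = i then ∑ b, Q (Sum.inl (es e, b)) * Q (Sum.inr (e, b, a)) else 0)) := by
  have key : ∀ g : Ed × Fin n × Fin n, (if (Sum.inl (i, a) : Univ k n Ed) ∈ need es ed g then
      ∏ z ∈ (need es ed g).erase (Sum.inl (i, a)), Q z else 0) ≤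
      (if es g.1 = i then (if g.2.1 = a then
        Q (Sum.inl (ed g.1, g.2.2)) * Q (Sum.inr (g.1, a, g.2.2)) else 0) else 0) +
      (if ed g.1 = i then (if g.2.2 = a then
        Q (Sum.inl (es g.1, g.2.1)) * Q (Sum.inr (g.1, g.2.1, a)) else 0) else 0) := by
    rintro ⟨e, b, c⟩
    simp only
    have hn1 : (0 : ℝ) ≤ (if es e = i then (if b = a then
        Q (Sum.inl (ed e, c)) * Q (Sum.inr (e, a, c)) else 0) else 0) := by
      split_ifs
      · exact mul_nonneg (h0 _) (h0 _)
      · exact le_rfl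
      · exact le_rfl
    have hn2 : (0 : ℝ) ≤ (if ed e = i then (if c = a then
        Q (Sum.inl (es e, b)) * Q (Sum.inr (e, b, a)) else 0) else 0) := by
      split_ifs
      · exact mul_nonneg (h0 _) (h0 _)
      · exact le_rfl
      · exact le_rfl
    by_cases hm : (Sum.inl (i, a) : Univ k n Ed) ∈ need es ed (e, b, c)
    · rw [if_pos hm]
      have hm' := hm
      simp only [need, Finset.mem_insert, Finset.mem_singleton, Sum.inl.injEq, Prod.mk.injEq,
        reduceCtorEq, or_false] at hm'
      rcases hm' with ⟨rfl, rfl⟩ | ⟨rfl, rfl⟩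
      · have : (need es ed (e, a, c)).erase (Sum.inl (es e, a)) =
            {Sum.inl (ed e, c), Sum.inr (e, a, c)} := by
          unfold need
          rw [Finset.erase_insert (by simp [hne])]
        rw [this, Finset.prod_insert (by simp), Finset.prod_singleton]
        simp only [if_true] at hn1 hn2 ⊢
        linarith
      · have : (need es ed (e, b, a)).erase (Sum.inl (ed e, a)) =
            {Sum.inl (es e, b), Sum.inr (e, b, a)} := by
          unfold need
          rw [Finset.insert_comm, Finset.erase_insert (by simp [(hne e).symm])]
        rw [this, Finset.prod_insert (by simp), Finset.prod_singleton]
        simp only [if_true] at hn1 hn2 ⊢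
        linarith
    · rw [if_neg hm]
      linarith
  refine (Finset.sum_le_sum fun g _ => key g).trans (le_of_eq ?_)
  rw [Fintype.sum_prod_type]
  apply Finset.sum_congr rfl
  intro e _
  rw [Finset.sum_add_distrib]
  congr 1
  · rw [Fintype.sum_prod_type_right]
    by_cases h : es e = i <;> simp [h]
  · rw [Fintype.sum_prod_type]
    by_cases h : ed e = i <;> simp [h]

theorem sum_edge_le (es ed : Ed → Fin k) (hne : ∀ e, es e ≠ ed e) (Q : Univ k n Ed → ℝ)
    (g : Ed × Fin n × Fin n) :
    (∑ g', if (Sum.inr g : Univ k n Ed) ∈ need es ed g' then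
      ∏ z ∈ (need es ed g').erase (Sum.inr g), Q z else 0) =
    Q (Sum.inl (es g.1, g.2.1)) * Q (Sum.inl (ed g.1, g.2.2)) := by
  rw [Fintype.sum_eq_single g]
  · have : (need es ed g).erase (Sum.inr g) =
        {Sum.inl (es g.1, g.2.1), Sum.inl (ed g.1, g.2.2)} := by
      unfold need
      ext x
      simp only [Finset.mem_erase, Finset.mem_insert, Finset.mem_singleton]
      constructor
      · tauto
      · rintro (rfl | rfl) <;> simp
    rw [if_pos (by simp [need]), this, Finset.prod_insert (by simp [hne]), Finset.prod_singleton]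
  · intro g' hg'
    rw [if_neg]
    simp [need, hg'.symm]

end

section
variable {k : ℕ} {Ed : Type} [Fintype Ed] [DecidableEq Ed]

/-- The marked element of class `c` for the copy `φ`. -/
def marked {n : ℕ} (es ed : Ed → Fin k) (φ : Fin k → Fin n) : Fin k ⊕ Ed → Univ k n Ed
  | .inl i => .inl (i, φ i)
  | .inr e => .inr (e, φ (es e), φ (ed e))

theorem kl_marked {n : ℕ} (es ed : Ed → Fin k) (φ : Fin k → Fin n) (c : Fin k ⊕ Ed) :
    kl (marked es ed φ c) = c := by
  cases c <;> rfl

theorem card_vertex {n : ℕ} (i : Fin k) :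
    (univ.filter fun u : Univ k n Ed => kl u = Sum.inl i).card ≤ n := by
  have : (univ.filter fun u : Univ k n Ed => kl u = Sum.inl i) ⊆
      (univ : Finset (Fin n)).image fun a => Sum.inl (i, a) := by
    rintro (⟨j, a⟩ | g) hu
    · replace hu := (Finset.mem_filter.1 hu).2
      simp only [kl, Sum.inl.injEq] at hu
      subst hu
      simp
    · replace hu := (Finset.mem_filter.1 hu).2
      simp [kl] at hu
  refine (Finset.card_le_card this).trans (Finset.card_image_le.trans ?_)
  simp

theorem card_edge {n : ℕ} (e : Ed) :
    (univ.filter fun u : Univ k n Ed => kl u = Sum.inr e).card ≤ n * n := by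
  have : (univ.filter fun u : Univ k n Ed => kl u = Sum.inr e) ⊆
      (univ : Finset (Fin n × Fin n)).image fun a => Sum.inr (e, a) := by
    rintro (⟨j, a⟩ | ⟨e', g⟩) hu
    · replace hu := (Finset.mem_filter.1 hu).2
      simp [kl] at hu
    · replace hu := (Finset.mem_filter.1 hu).2
      simp only [kl, Sum.inr.injEq] at hu
      subst hu
      simp
  refine (Finset.card_le_card this).trans (Finset.card_image_le.trans ?_)
  simp

theorem sum_two_le (es ed : Ed → Fin k) (i : Fin k) (F G : Ed → ℝ) (M : ℝ) (hM : 0 ≤ M)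
    (hF : ∀ e, es e = i → F e ≤ M) (hG : ∀ e, ed e = i → G e ≤ M) :
    ∑ e, ((if es e = i then F e else 0) + (if ed e = i then G e else 0)) ≤
      (2 * Fintype.card Ed + 1) * M := by
  calc _ ≤ ∑ e : Ed, (M + M) := by
        apply Finset.sum_le_sum
        intro e _
        apply add_le_add
        · split_ifs with h
          · exact hF e h
          · exact hM
        · split_ifs with h
          · exact hG e h
          · exact hM
    _ = (2 * Fintype.card Ed) * M := by
        simp; ring
    _ ≤ _ := by linarith

theorem concrete (H : SimpleGraph (Fin k)) (es ed : Ed → Fin k) (hne : ∀ e, es e ≠ ed e)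
    (hadj : ∀ e, H.Adj (es e) (ed e))
    (hcov : ∀ i j, H.Adj i j → ∃ e, (es e = i ∧ ed e = j) ∨ (es e = j ∧ ed e = i))
    {T : ℕ} (σ : Fin k ⊕ Ed ≃ Fin T)
    (hs1 : ∀ e, σ (Sum.inl (es e)) < σ (Sum.inr e))
    (hs2 : ∀ e, σ (Sum.inl (ed e)) < σ (Sum.inr e))
    (x : Fin k ⊕ Ed → ℝ) (hx : ∀ c, 0 ≤ x c) (b : ℝ) (dv : Fin k → ℝ)
    (c0 : ∀ e, 2 - x (Sum.inl (es e)) - x (Sum.inl (ed e)) - x (Sum.inr e) ≤ b)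
    (cv1 : ∀ e, 1 - x (Sum.inl (ed e)) - x (Sum.inr e) ≤ dv (es e))
    (cv2 : ∀ e, 1 - x (Sum.inl (es e)) - x (Sum.inr e) ≤ dv (ed e))
    (cv : ∀ i, 1 + 2 * dv i + (∑ c, if σ c < σ (Sum.inl i) then x c else 0) ≤ 2 * b)
    (ce : ∀ e, 2 - x (Sum.inl (es e)) - x (Sum.inl (ed e)) +
      (∑ c, if σ c < σ (Sum.inr e) then x c else 0) ≤ 2 * b) :
    ∃ c : ℝ, 0 < c ∧ ∀ n : ℕ, 1 ≤ n →
      ∃ G : LearningGraph (Set.univ : Set (EdgeSlot n → Bool)) (subgraphFn H n),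
        G.complexity ≤ c * (n : ℝ) ^ b := by
  classical
  set C : ℝ := 2 * Fintype.card Ed + 1 with hC
  have hCpos : 0 < C := by positivity
  have hC1 : 1 ≤ C := by
    have : (0 : ℝ) ≤ Fintype.card Ed := Nat.cast_nonneg _
    linarith
  refine ⟨(T + 1) * 2 ^ T * (C * 2 ^ T), by positivity, fun n hn => ?_⟩
  set N : ℝ := (n : ℝ) with hN
  have hN1 : 1 ≤ N := Nat.one_le_cast.2 hn
  have hN0 : 0 < N := by linarith
  -- the copy
  have hφ : ∀ y : EdgeSlot n → Bool, ∃ φ : Fin k → Fin n, subgraphFn H n y = true →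
      Function.Injective φ ∧ ∀ i j : Fin k, H.Adj i j → ∀ q : EdgeSlot n,
      ((q.1.1 = φ i ∧ q.1.2 = φ j) ∨ (q.1.1 = φ j ∧ q.1.2 = φ i)) → y q = true := by
    intro y
    by_cases hy : HasHCopy H y
    · obtain ⟨φ, hφ⟩ := hy
      exact ⟨φ, fun _ => ⟨φ.injective, hφ⟩⟩
    · refine ⟨fun _ => ⟨0, hn⟩, fun h => ?_⟩
      simp [subgraphFn, hy] at h
  choose φ hφ using hφ
  -- densities
  set r : Fin k ⊕ Ed → ℝ := fun c => N ^ (-x c) with hr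
  have hrpos : ∀ c, 0 < r c := fun c => Real.rpow_pos_of_pos hN0 _
  have hr1 : ∀ c, r c ≤ 1 := fun c =>
    Real.rpow_le_one_of_one_le_of_nonpos hN1 (by linarith [hx c])
  set q : Fin T → ℝ := fun t => r (σ.symm t) / 2 with hq
  have hq0 : ∀ t, 0 < q t := fun t => half_pos (hrpos _)
  have hqh : ∀ t, q t ≤ 1 / 2 := fun t => by
    have := hr1 (σ.symm t)
    simp only [hq]; linarith
  set cls : Univ k n Ed → Fin T := fun u => σ (kl u) with hcls
  have hqr : ∀ u, q (cls u) ≤ r (kl u) := fun u => by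
    have := hrpos (kl u)
    simp only [hq, hcls, Equiv.symm_apply_apply]; linarith
  set mk : (EdgeSlot n → Bool) → Fin T → Univ k n Ed :=
    fun y t => marked es ed (φ y) (σ.symm t) with hmk
  have hmkcls : ∀ y t, cls (mk y t) = t := fun y t => by
    simp only [hcls, hmk, kl_marked, Equiv.apply_symm_apply]
  have hm0 : ∀ y t u, 0 ≤ qm cls q (mk y) t u := fun y t => qm_nonneg cls q hq0 _ _
  have hm1 : ∀ y t u, qm cls q (mk y) t u ≤ 1 := fun y t => qm_le_one cls q hqh _ _
  have hm2 : ∀ y t u, marked es ed (φ y) (kl u) ≠ u → qm cls q (mk y) t u ≤ r (kl u) := by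
    intro y t u hu
    unfold qm
    rw [if_neg]
    · exact hqr u
    · simpa only [hcls, hmk, Equiv.symm_apply_apply] using hu
  have hQ0 : ∀ u : Univ k n Ed, 0 ≤ q (cls u) := fun u => (hq0 _).le
  have hQ1 : ∀ u : Univ k n Ed, q (cls u) ≤ 1 := fun u => (hqh _).trans (by norm_num)
  -- exponents
  let a : Fin k ⊕ Ed → ℝ := Sum.elim (fun i => 1 + dv i)
    (fun e => 2 - x (Sum.inl (es e)) - x (Sum.inl (ed e)))
  let bb : Fin k ⊕ Ed → ℝ := Sum.elim dv (fun _ => 0)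
  -- root bound
  have hroot : ∀ Q : Univ k n Ed → ℝ, (∀ u, 0 ≤ Q u) → (∀ u, Q u ≤ 1) → (∀ u, Q u ≤ r (kl u)) →
      ∑ X, mu Q X * ((lab (need es ed) slot X).card : ℝ) ≤ C * N ^ b := by
    intro Q h0 h1 h2
    refine (sum_lab_le (need es ed) slot slot_card Q h0 h1).trans ?_
    have : ∀ g : Ed × Fin n × Fin n, ∏ z ∈ need es ed g, Q z ≤ N ^ (b - 2) := by
      intro g
      rw [prod_need es ed hne]
      calc _ ≤ r (Sum.inl (es g.1)) * (r (Sum.inl (ed g.1)) * r (Sum.inr g.1)) := by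
            have := h0
            have := h2
            apply mul_le_mul (h2 _) _ (mul_nonneg (h0 _) (h0 _)) (hrpos _).le
            exact mul_le_mul (h2 _) (h2 _) (h0 _) (hrpos _).le
        _ = N ^ (-x (Sum.inl (es g.1)) + (-x (Sum.inl (ed g.1)) + -x (Sum.inr g.1))) := by
            simp only [hr]
            rw [Real.rpow_add hN0, Real.rpow_add hN0]
        _ ≤ _ := by
            apply Real.rpow_le_rpow_of_exponent_le hN1
            linarith [c0 g.1]
    refine (Finset.sum_le_sum fun g _ => this g).trans ?_
    have e1 : N ^ b = N * N * N ^ (b - 2) := by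
      rw [show b = 1 + 1 + (b - 2) by ring, Real.rpow_add hN0, Real.rpow_add hN0, Real.rpow_one]
      congr 2; ring
    simp only [Finset.sum_const, Finset.card_univ, Fintype.card_prod, Fintype.card_fin,
      nsmul_eq_mul, Nat.cast_mul]
    rw [e1]
    have e2 : (0 : ℝ) ≤ N * N * N ^ (b - 2) := by positivity
    have e3 : (Fintype.card Ed : ℝ) ≤ C := by
      have : (0 : ℝ) ≤ Fintype.card Ed := Nat.cast_nonneg _
      linarith
    calc _ = (Fintype.card Ed : ℝ) * (N * N * N ^ (b - 2)) := by ring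
      _ ≤ _ := mul_le_mul_of_nonneg_right e3 e2
  -- vertex bound
  have hvert : ∀ (Q : Univ k n Ed → ℝ) (i : Fin k) (v : Fin n), (∀ u, 0 ≤ Q u) →
      (∀ u, Q u ≤ 1) →
      (∀ e w, es e = i → Q (Sum.inl (ed e, w)) * Q (Sum.inr (e, v, w)) ≤
        r (Sum.inl (ed e)) * r (Sum.inr e)) →
      (∀ e w, ed e = i → Q (Sum.inl (es e, w)) * Q (Sum.inr (e, w, v)) ≤
        r (Sum.inl (es e)) * r (Sum.inr e)) →
      ∑ X, mu Q X * ((lab (need es ed) slot (insert (Sum.inl (i, v)) X) \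
        lab (need es ed) slot X).card : ℝ) ≤ C * N ^ dv i := by
    intro Q i v h0 h1 h2 h3
    refine (sum_lab_diff_le (need es ed) slot slot_card Q h0 h1 _).trans ?_
    refine (sum_vertex_le es ed hne Q h0 i v).trans ?_
    have hgen : ∀ c c' : Fin k ⊕ Ed, 1 - x c - x c' ≤ dv i →
        (n : ℝ) * (r c * r c') ≤ N ^ dv i := by
      intro c c' hcc
      calc (n : ℝ) * (r c * r c') = N ^ (1 + (-x c + -x c')) := by
            rw [Real.rpow_add hN0, Real.rpow_add hN0, Real.rpow_one]
        _ ≤ _ := by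
            apply Real.rpow_le_rpow_of_exponent_le hN1
            linarith
    apply sum_two_le
    · exact (Real.rpow_pos_of_pos hN0 _).le
    · intro e he
      refine (Finset.sum_le_sum fun w _ => h2 e w he).trans ?_
      rw [Finset.sum_const, Finset.card_univ, Fintype.card_fin, nsmul_eq_mul]
      apply hgen
      rw [← he]
      exact cv1 e
    · intro e he
      refine (Finset.sum_le_sum fun w _ => h3 e w he).trans ?_
      rw [Finset.sum_const, Finset.card_univ, Fintype.card_fin, nsmul_eq_mul]
      apply hgen
      rw [← he]
      exact cv2 e
  have main := exists_staged (f := subgraphFn H n) cls q hq0 hqh (lab (need es ed) slot)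
    (lab_mono _ _) mk (fun y _ => hmkcls y) ?_ (C * 2 ^ T * N ^ b)
    (by have := Real.rpow_pos_of_pos hN0 b; positivity)
    (C * N ^ b) (C * N ^ b) (fun t => C * N ^ a (σ.symm t)) (fun t => C * N ^ bb (σ.symm t))
    (by have := Real.rpow_pos_of_pos hN0 b; positivity)
    (fun t => by have := Real.rpow_pos_of_pos hN0 (a (σ.symm t)); positivity)
    ?_ ?_ ?_ ?_ ?_ ?_
  · obtain ⟨G, hG⟩ := main
    refine ⟨G, hG.trans (le_of_eq ?_)⟩
    ring
  · -- certificates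
    intro y hy X hX z hz
    have h1 := hφ y hy
    have : HasHCopy H z := by
      refine ⟨⟨φ y, h1.1⟩, ?_⟩
      intro i j hij s hs
      simp only [Function.Embedding.coeFn_mk] at hs
      rw [hz s, h1.2 i j hij s hs]
      obtain ⟨e, he⟩ := hcov i j hij
      have hin : ∀ c, marked es ed (φ y) c ∈ X := fun c => by
        have := hX (σ c)
        simpa only [hmk, Equiv.symm_apply_apply] using this
      refine Finset.mem_biUnion.2 ⟨(e, φ y (es e), φ y (ed e)), ?_, ?_⟩
      · refine Finset.mem_filter.2 ⟨Finset.mem_univ _, ?_⟩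
        intro u hu
        simp only [need, Finset.mem_insert, Finset.mem_singleton] at hu
        rcases hu with rfl | rfl | rfl
        · exact hin (Sum.inl (es e))
        · exact hin (Sum.inl (ed e))
        · exact hin (Sum.inr e)
      · simp only [slot, Finset.mem_filter, Finset.mem_univ, true_and]
        rcases he with ⟨rfl, rfl⟩ | ⟨rfl, rfl⟩ <;> tauto
    simp [subgraphFn, this]
  · exact hroot _ hQ0 hQ1 hqr
  · intro t
    obtain ⟨c, rfl⟩ := σ.surjective t
    simp only [Finset.mul_sum]
    rw [Finset.sum_comm]
    simp only [Equiv.symm_apply_apply]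
    have hfil : (univ.filter fun u => cls u = σ c) = univ.filter fun u => kl u = c := by
      ext u; simp [hcls]
    rw [hfil]
    rcases c with i | e
    · calc _ ≤ ∑ u ∈ univ.filter (fun u : Univ k n Ed => kl u = Sum.inl i), C * N ^ dv i := by
            apply Finset.sum_le_sum
            rintro (⟨j, v⟩ | g) hu
            · replace hu := (Finset.mem_filter.1 hu).2
              simp only [kl, Sum.inl.injEq] at hu
              subst hu
              apply hvert _ _ _ hQ0 hQ1
              · intro e w _
                exact mul_le_mul (hqr _) (hqr _) (hQ0 _) (hrpos _).le
              · intro e w _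
                exact mul_le_mul (hqr _) (hqr _) (hQ0 _) (hrpos _).le
            · replace hu := (Finset.mem_filter.1 hu).2
              simp [kl] at hu
        _ ≤ N * (C * N ^ dv i) := by
            rw [Finset.sum_const, nsmul_eq_mul]
            have := Real.rpow_pos_of_pos hN0 (dv i)
            apply mul_le_mul_of_nonneg_right _ (by positivity)
            exact Nat.cast_le.2 (card_vertex i)
        _ = C * N ^ (1 + dv i) := by
            rw [Real.rpow_add hN0, Real.rpow_one]; ring
    · calc _ ≤ ∑ u ∈ univ.filter (fun u : Univ k n Ed => kl u = Sum.inr e),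
              r (Sum.inl (es e)) * r (Sum.inl (ed e)) := by
            apply Finset.sum_le_sum
            rintro (⟨j, v⟩ | g) hu
            · replace hu := (Finset.mem_filter.1 hu).2
              simp [kl] at hu
            · replace hu := (Finset.mem_filter.1 hu).2
              simp only [kl, Sum.inr.injEq] at hu
              subst hu
              refine (sum_lab_diff_le (need es ed) slot slot_card _ hQ0 hQ1 _).trans ?_
              rw [sum_edge_le es ed hne]
              exact mul_le_mul (hqr _) (hqr _) (hQ0 _) (hrpos _).le
        _ ≤ (N * N) * (r (Sum.inl (es e)) * r (Sum.inl (ed e))) := by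
            rw [Finset.sum_const, nsmul_eq_mul]
            apply mul_le_mul_of_nonneg_right _ (mul_pos (hrpos _) (hrpos _)).le
            rw [hN]
            exact_mod_cast card_edge e
        _ = N ^ (2 - x (Sum.inl (es e)) - x (Sum.inl (ed e))) := by
            rw [show (2 - x (Sum.inl (es e)) - x (Sum.inl (ed e)) : ℝ) =
              1 + 1 + (-x (Sum.inl (es e)) + - x (Sum.inl (ed e))) by ring,
              Real.rpow_add hN0, Real.rpow_add hN0, Real.rpow_add hN0, Real.rpow_one]
        _ ≤ C * N ^ (2 - x (Sum.inl (es e)) - x (Sum.inl (ed e))) :=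
            le_mul_of_one_le_left (Real.rpow_pos_of_pos hN0 _).le hC1
  · intro y hy
    apply hroot _ (hm0 y 0) (hm1 y 0)
    intro u
    by_cases hu : marked es ed (φ y) (kl u) = u
    · unfold qm
      rw [if_pos (by simpa only [hcls, hmk, Equiv.symm_apply_apply] using hu)]
      simpa using (hrpos _).le
    · exact hm2 y 0 u hu
  · intro y hy t
    obtain ⟨c, rfl⟩ := σ.surjective t
    have hmkc : mk y (σ c) = marked es ed (φ y) c := by
      simp only [hmk, Equiv.symm_apply_apply]
    rw [hmkc]
    simp only [Equiv.symm_apply_apply]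
    have hzero : ∀ e c, σ c < σ (Sum.inr e) →
        qm cls q (mk y) (σ c) (Sum.inr (e, φ y (es e), φ y (ed e))) = 0 := by
      intro e c hc
      unfold qm
      rw [if_pos (by simp only [hcls, hmk, Equiv.symm_apply_apply, kl, marked]), if_neg]
      simp only [hcls, kl]
      exact not_lt.2 (Fin.lt_def.1 hc).le
    rcases c with i | e
    · apply hvert _ _ _ (hm0 y _) (hm1 y _)
      · rintro e w rfl
        by_cases hw : w = φ y (ed e)
        · subst hw
          rw [hzero e _ (hs1 e), mul_zero]
          exact (mul_pos (hrpos _) (hrpos _)).le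
        · apply mul_le_mul (hm2 y _ _ _) (hm2 y _ _ _) (hm0 _ _ _) (hrpos _).le
          · simp [marked, kl, Ne.symm hw]
          · simp [marked, kl, Ne.symm hw]
      · rintro e w rfl
        by_cases hw : w = φ y (es e)
        · subst hw
          rw [hzero e _ (hs2 e), mul_zero]
          exact (mul_pos (hrpos _) (hrpos _)).le
        · apply mul_le_mul (hm2 y _ _ _) (hm2 y _ _ _) (hm0 _ _ _) (hrpos _).le
          · simp [marked, kl, Ne.symm hw]
          · simp [marked, kl, Ne.symm hw]
    · refine (sum_lab_diff_le (need es ed) slot slot_card _ (hm0 y _) (hm1 y _) _).trans ?_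
      refine (le_of_eq (sum_edge_le es ed hne _ (e, φ y (es e), φ y (ed e)))).trans ?_
      simp only [bb, Sum.elim_inr, Real.rpow_zero, mul_one]
      refine le_trans ?_ hC1
      exact mul_le_one₀ (hm1 _ _ _) (hm0 _ _ _) (hm1 _ _ _)
  · have h1 : (1 : ℝ) ≤ 2 ^ T := one_le_pow₀ (by norm_num)
    have h2 : (0 : ℝ) ≤ C * N ^ b := by
      have := Real.rpow_pos_of_pos hN0 b; positivity
    have h3 : C * N ^ b ≤ C * 2 ^ T * N ^ b := by nlinarith
    nlinarith
  · intro t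
    obtain ⟨c, rfl⟩ := σ.surjective t
    simp only [Equiv.symm_apply_apply]
    set sx : ℝ := ∑ c', if σ c' < σ c then x c' else 0 with hsx
    have hexp : a c + bb c ≤ 2 * b - sx := by
      rcases c with i | e
      · have := cv i
        simp only [a, bb, Sum.elim_inl]
        linarith
      · have := ce e
        simp only [a, bb, Sum.elim_inr]
        linarith
    have hP : (1 / 2) ^ T * N ^ (-sx) ≤
        ∏ s : Fin T, if (s : ℕ) < ((σ c : Fin T) : ℕ) then q s else 1 := by
      have e1 : (1 / 2) ^ T * N ^ (-sx) =
          ∏ s : Fin T, (1 / 2) * N ^ (-(if s < σ c then x (σ.symm s) else 0)) := by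
        rw [Finset.prod_mul_distrib, ← Real.rpow_sum_of_pos hN0, Finset.sum_neg_distrib]
        congr 1
        · simp
        · congr 2
          rw [hsx]
          exact Fintype.sum_equiv σ _ _ (by simp)
      rw [e1]
      apply Finset.prod_le_prod
      · intro s _
        have := Real.rpow_pos_of_pos hN0 (-(if s < σ c then x (σ.symm s) else 0))
        positivity
      · intro s _
        by_cases hs : s < σ c
        · rw [if_pos hs, if_pos (Fin.lt_def.1 hs)]
          simp only [hq, hr]
          linarith
        · rw [if_neg hs, if_neg (fun h => hs (Fin.lt_def.2 h))]
          simp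
          norm_num
    have h4 : C * N ^ a c * (C * N ^ bb c) ≤ C ^ 2 * N ^ (2 * b - sx) := by
      calc _ = C ^ 2 * N ^ (a c + bb c) := by rw [Real.rpow_add hN0]; ring
        _ ≤ _ := by
          apply mul_le_mul_of_nonneg_left _ (by positivity)
          exact Real.rpow_le_rpow_of_exponent_le hN1 hexp
    refine h4.trans ?_
    have h5 : N ^ (2 * b - sx) = N ^ b * N ^ b * N ^ (-sx) := by
      rw [← Real.rpow_add hN0, ← Real.rpow_add hN0]; congr 1; ring
    have h6 : (1 : ℝ) ≤ 2 ^ T := one_le_pow₀ (by norm_num)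
    have hb := Real.rpow_pos_of_pos hN0 b
    have hS := Real.rpow_pos_of_pos hN0 (-sx)
    calc C ^ 2 * N ^ (2 * b - sx) ≤ C ^ 2 * N ^ (2 * b - sx) * 2 ^ T :=
          le_mul_of_one_le_right (by positivity) h6
      _ = (C * 2 ^ T * N ^ b) ^ 2 * ((1 / 2) ^ T * N ^ (-sx)) := by
          rw [h5, one_div, inv_pow]; field_simp
      _ ≤ _ := mul_le_mul_of_nonneg_left hP (by positivity)

end

theorem exists_order {K : Type} [Fintype K] (ph : K → ℕ) :
    ∃ σ : K ≃ Fin (Fintype.card K), ∀ c c', σ c ≤ σ c' → ph c ≤ ph c' := by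
  let e := Fintype.equivFin K
  let f : Fin (Fintype.card K) → ℕ := fun t => ph (e.symm t)
  refine ⟨e.trans (Tuple.sort f).symm, ?_⟩
  intro c c' h
  have := Tuple.monotone_sort f h
  simpa [f] using this

theorem sum_before_le {K : Type} [Fintype K] [DecidableEq K] {T : ℕ} (ph : K → ℕ) (σ : K ≃ Fin T)
    (hσ : ∀ c c', σ c ≤ σ c' → ph c ≤ ph c') (x : K → ℝ) (hx : ∀ c, 0 ≤ x c) (c0 : K) :
    (∑ c, if σ c < σ c0 then x c else 0) ≤ (∑ c, if ph c ≤ ph c0 then x c else 0) - x c0 := by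
  have h1 : x c0 = ∑ c, if c = c0 then x c else 0 := by simp
  have h2 : (∑ c, if σ c < σ c0 then x c else 0) + x c0 ≤
      ∑ c, if ph c ≤ ph c0 then x c else 0 := by
    rw [h1, ← Finset.sum_add_distrib]
    apply Finset.sum_le_sum
    intro c _
    by_cases hc : c = c0
    · subst hc; simp
    · have := hx c
      by_cases h : σ c < σ c0
      · simp [hc, h, hσ c c0 h.le]
      · rw [if_neg h, if_neg hc]
        split_ifs <;> linarith
  linarith

end LGAux

/-- **Theorem 2 of the paper.** For a fixed graph `H` on `k ≥ 3` vertices with `m` edges and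
minimum degree `d ≥ 1`, there is a learning graph for the subgraph-detection function
`f_{H,n}` of complexity `O(n^{2 - 2/k - (2k-d-3)/(k(d+1)(m-d+2))})`. -/
theorem subgraph_learningGraph_minDegree (k m d : ℕ) (hk : 3 ≤ k)
    (H : SimpleGraph (Fin k)) [DecidableRel H.Adj]
    (hm : H.edgeFinset.card = m) (hd : H.minDegree = d) (hd1 : 1 ≤ d) :
    ∃ c : ℝ, 0 < c ∧ ∀ n : ℕ, 1 ≤ n →
      ∃ G : LearningGraph (Set.univ : Set (EdgeSlot n → Bool)) (subgraphFn H n),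
        G.complexity ≤
          c * (n : ℝ) ^ ((2 : ℝ) - 2 / k -
            (2 * k - d - 3) / (k * (d + 1) * ((m : ℝ) - d + 2))) := by
  classical
  haveI : Nonempty (Fin k) := ⟨⟨0, by omega⟩⟩
  obtain ⟨v, hv⟩ := H.exists_minimal_degree_vertex
  rw [hd] at hv
  let Ed : Type := {e : Sym2 (Fin k) // e ∈ H.edgeFinset}
  let es : Ed → Fin k := fun e => (Quot.out e.1).1
  let ed : Ed → Fin k := fun e => (Quot.out e.1).2
  have hout : ∀ e : Ed, s(es e, ed e) = e.1 := fun e => Quot.out_eq e.1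
  have hadj : ∀ e, H.Adj (es e) (ed e) := by
    intro e
    have := e.2
    rw [SimpleGraph.mem_edgeFinset, ← hout e] at this
    exact this
  have hne : ∀ e, es e ≠ ed e := fun e => (hadj e).ne
  have hcov : ∀ i j, H.Adj i j → ∃ e, (es e = i ∧ ed e = j) ∨ (es e = j ∧ ed e = i) := by
    intro i j hij
    refine ⟨⟨s(i, j), by simpa using hij⟩, ?_⟩
    have := hout ⟨s(i, j), by simpa using hij⟩
    simpa using this
  have hmem : ∀ e : Ed, v ∈ e.1 ↔ v = es e ∨ v = ed e := by
    intro e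
    rw [← hout e, Sym2.mem_iff]
  -- counting
  have hcin : (Finset.univ.filter fun e : Ed => v ∈ e.1).card = d := by
    rw [hv, ← SimpleGraph.card_incidenceFinset_eq_degree, SimpleGraph.incidenceFinset_eq_filter,
      Finset.card_filter, Finset.card_filter]
    exact Finset.sum_coe_sort H.edgeFinset (fun e => if v ∈ e then 1 else 0)
  have hcall : Fintype.card Ed = m := by
    rw [← hm]; exact Fintype.card_coe _
  have hcout : d + (Finset.univ.filter fun e : Ed => ¬ v ∈ e.1).card = m := by
    rw [← hcall, ← hcin, Finset.card_filter_add_card_filter_not, Finset.card_univ]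
  set D : ℕ := (Finset.univ.filter fun e : Ed => ¬ v ∈ e.1).card with hD
  have hmD : (m : ℝ) - d = D := by
    rw [← hcout]; push_cast; ring
  have hdk : d + 1 ≤ k := by
    have := H.degree_lt_card_verts v
    rw [← hv, Fintype.card_fin] at this
    omega
  -- exponents
  have hk0 : (0 : ℝ) < k := by
    have : 0 < k := by omega
    exact_mod_cast this
  have hk3 : (3 : ℝ) ≤ k := by exact_mod_cast hk
  have hdk' : (d : ℝ) + 1 ≤ k := by exact_mod_cast hdk
  have hd1' : (1 : ℝ) ≤ d := by exact_mod_cast hd1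
  have hD0 : (0 : ℝ) ≤ D := Nat.cast_nonneg _
  obtain ⟨κ, hκ⟩ : ∃ κ : ℝ, κ = 1 / k := ⟨_, rfl⟩
  obtain ⟨y, hy⟩ : ∃ y : ℝ, y = (k - 1) / (k * (d + 1)) := ⟨_, rfl⟩
  obtain ⟨t, ht⟩ : ∃ t : ℝ, t = (2 * k - d - 3) / (k * (d + 1) * ((m : ℝ) - d + 2)) := ⟨_, rfl⟩
  have hb : (2 : ℝ) - 2 / k - (2 * k - d - 3) / (k * (d + 1) * ((m : ℝ) - d + 2)) =
      2 - 2 * κ - t := by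
    rw [← ht, hκ]; ring
  rw [hb]
  rw [hmD] at ht
  have eκ : (k : ℝ) * κ = 1 := by rw [hκ]; field_simp
  have hd2 : (0 : ℝ) < (d : ℝ) + 1 := by linarith
  have ey : (d : ℝ) * y + y = 1 - κ := by
    rw [hy, hκ]; field_simp
  have et : (D : ℝ) * t + 2 * t = 2 * y - κ := by
    have : (D : ℝ) + 2 ≠ 0 := by positivity
    rw [ht, hy, hκ]; field_simp; ring
  have hκ0 : 0 ≤ κ := by rw [hκ]; positivity
  have hy0 : 0 ≤ y := by
    rw [hy]; apply div_nonneg <;> [linarith; positivity]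
  have ht0 : 0 ≤ t := by
    rw [ht]; apply div_nonneg <;> [linarith; positivity]
  have hDt : 0 ≤ (D : ℝ) * t := mul_nonneg hD0 ht0
  have hdy : y ≤ (d : ℝ) * y := le_mul_of_one_le_left hy0 hd1'
  -- phases
  let ph : Fin k ⊕ Ed → ℕ := Sum.elim (fun i => if i = v then 2 else 0)
    (fun e => if v ∈ e.1 then 3 else 1)
  let x : Fin k ⊕ Ed → ℝ := Sum.elim (fun i => if i = v then 1 else κ)
    (fun e => if v ∈ e.1 then y else t)
  have hx : ∀ c, 0 ≤ x c := by
    rintro (i | e)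
    · simp only [x, Sum.elim_inl]; split_ifs <;> linarith
    · simp only [x, Sum.elim_inr]; split_ifs <;> linarith
  obtain ⟨σ, hσ⟩ := LGAux.exists_order ph
  have hbefore := LGAux.sum_before_le ph σ hσ x hx
  have sV : (∑ i : Fin k, if i = v then 0 else κ) = 1 - κ := by
    have h1 : ∀ i : Fin k, (if i = v then 0 else κ) = κ - if i = v then κ else 0 := by
      intro i; split_ifs <;> ring
    simp only [h1]
    rw [Finset.sum_sub_distrib]
    simp
    exact eκ
  have sV' : (∑ i : Fin k, if i = v then 1 else κ) = 2 - κ := by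
    have h1 : ∀ i : Fin k, (if i = v then 1 else κ) =
        (if i = v then 0 else κ) + if i = v then 1 else 0 := by
      intro i; split_ifs <;> ring
    simp only [h1]
    rw [Finset.sum_add_distrib, sV]
    simp
    ring
  have sI : ∀ c : ℝ, (∑ e : Ed, if v ∈ e.1 then c else 0) = d * c := by
    intro c
    rw [← Finset.sum_filter, Finset.sum_const, hcin, nsmul_eq_mul]
  have sO : ∀ c : ℝ, (∑ e : Ed, if v ∈ e.1 then 0 else c) = D * c := by
    intro c
    have h1 : ∀ e : Ed, (if v ∈ e.1 then 0 else c) = if ¬ v ∈ e.1 then c else 0 := by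
      intro e; split_ifs <;> rfl
    simp only [h1]
    rw [← Finset.sum_filter, Finset.sum_const, nsmul_eq_mul]
  have F0 : (∑ c, if ph c ≤ 0 then x c else 0) = 1 - κ := by
    rw [Fintype.sum_sum_type, ← sV]
    have h2 : (∑ e : Ed, if ph (Sum.inr e) ≤ 0 then x (Sum.inr e) else 0) = 0 := by
      apply Finset.sum_eq_zero
      intro e _
      by_cases h : v ∈ e.1 <;> simp [ph, h]
    rw [h2, add_zero]
    apply Finset.sum_congr rfl
    intro i _
    by_cases h : i = v <;> simp [ph, x, h]
  have F1 : (∑ c, if ph c ≤ 1 then x c else 0) = 1 - κ + D * t := by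
    rw [Fintype.sum_sum_type, ← sV, ← sO]
    congr 1
    · apply Finset.sum_congr rfl
      intro i _
      by_cases h : i = v <;> simp [ph, x, h]
    · apply Finset.sum_congr rfl
      intro e _
      by_cases h : v ∈ e.1 <;> simp [ph, x, h]
  have F2 : (∑ c, if ph c ≤ 2 then x c else 0) = 2 - κ + D * t := by
    rw [Fintype.sum_sum_type, ← sV', ← sO]
    congr 1
    · apply Finset.sum_congr rfl
      intro i _
      by_cases h : i = v <;> simp [ph, x, h]
    · apply Finset.sum_congr rfl
      intro e _
      by_cases h : v ∈ e.1 <;> simp [ph, x, h]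
  have F3 : (∑ c, if ph c ≤ 3 then x c else 0) = 2 - κ + (D * t + d * y) := by
    rw [Fintype.sum_sum_type, ← sV', ← sO, ← sI, ← Finset.sum_add_distrib]
    congr 1
    · apply Finset.sum_congr rfl
      intro i _
      by_cases h : i = v <;> simp [ph, x, h]
    · apply Finset.sum_congr rfl
      intro e _
      by_cases h : v ∈ e.1 <;> simp [ph, x, h]
  have hlt : ∀ (e : Ed) (i : Fin k), i ∈ e.1 → σ (Sum.inl i) < σ (Sum.inr e) := by
    intro e i hi
    by_contra hcon
    have := hσ _ _ (not_lt.1 hcon)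
    by_cases h1 : i = v
    · subst h1
      simp [ph, hi] at this
    · simp only [ph, Sum.elim_inl, Sum.elim_inr, if_neg h1] at this
      split_ifs at this <;> omega
  -- the three values attached to an edge
  have hedge : ∀ e : Ed,
      (es e = v ∧ ed e ≠ v ∧ v ∈ e.1) ∨ (es e ≠ v ∧ ed e = v ∧ v ∈ e.1) ∨
      (es e ≠ v ∧ ed e ≠ v ∧ v ∉ e.1) := by
    intro e
    have h1 := hmem e
    have h2 := hne e
    by_cases h3 : es e = v
    · left
      exact ⟨h3, fun h4 => h2 (h3.trans h4.symm), h1.2 (Or.inl h3.symm)⟩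
    · by_cases h4 : ed e = v
      · right; left
        exact ⟨h3, h4, h1.2 (Or.inr h4.symm)⟩
      · right; right
        refine ⟨h3, h4, fun h5 => ?_⟩
        rcases h1.1 h5 with h6 | h6
        · exact h3 h6.symm
        · exact h4 h6.symm
  refine LGAux.concrete H es ed hne hadj hcov σ ?_ ?_ x hx (2 - 2 * κ - t)
    (fun i => if i = v then 1 - κ - y else 1 - κ - t) ?_ ?_ ?_ ?_ ?_
  · intro e
    apply hlt
    rw [← hout e]; simp
  · intro e
    apply hlt
    rw [← hout e]; simp
  · intro e
    rcases hedge e with ⟨h1, h2, h3⟩ | ⟨h1, h2, h3⟩ | ⟨h1, h2, h3⟩ <;>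
      simp only [x, Sum.elim_inl, Sum.elim_inr, h1, h2, h3, if_true, if_false] <;> linarith
  · intro e
    rcases hedge e with ⟨h1, h2, h3⟩ | ⟨h1, h2, h3⟩ | ⟨h1, h2, h3⟩ <;>
      simp only [x, Sum.elim_inl, Sum.elim_inr, h1, h2, h3, if_true, if_false] <;> linarith
  · intro e
    rcases hedge e with ⟨h1, h2, h3⟩ | ⟨h1, h2, h3⟩ | ⟨h1, h2, h3⟩ <;>
      simp only [x, Sum.elim_inl, Sum.elim_inr, h1, h2, h3, if_true, if_false] <;> linarith
  · intro i
    have h := hbefore (Sum.inl i)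
    by_cases hi : i = v
    · have e1 : ph (Sum.inl i) = 2 := by simp [ph, hi]
      have e2 : x (Sum.inl i) = 1 := by simp [x, hi]
      rw [e1, e2, F2] at h
      simp only [if_pos hi]
      linarith
    · have e1 : ph (Sum.inl i) = 0 := by simp [ph, hi]
      have e2 : x (Sum.inl i) = κ := by simp [x, hi]
      rw [e1, e2, F0] at h
      simp only [if_neg hi]
      linarith
  · intro e
    have h := hbefore (Sum.inr e)
    have exv : x (Sum.inl v) = 1 := by simp [x]
    have exn : ∀ i, i ≠ v → x (Sum.inl i) = κ := fun i hi => by simp [x, hi]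
    rcases hedge e with ⟨h1, h2, h3⟩ | ⟨h1, h2, h3⟩ | ⟨h1, h2, h3⟩
    · have e1 : ph (Sum.inr e) = 3 := by simp [ph, h3]
      have e2 : x (Sum.inr e) = y := by simp [x, h3]
      rw [e1, e2, F3] at h
      rw [h1, exv, exn _ h2]
      linarith
    · have e1 : ph (Sum.inr e) = 3 := by simp [ph, h3]
      have e2 : x (Sum.inr e) = y := by simp [x, h3]
      rw [e1, e2, F3] at h
      rw [h2, exv, exn _ h1]
      linarith
    · have e1 : ph (Sum.inr e) = 1 := by simp [ph, h3]
      have e2 : x (Sum.inr e) = t := by simp [x, h3]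
      rw [e1, e2, F1] at h
      rw [exn _ h1, exn _ h2]
      linarith
end
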